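/- For all nonnegative integers n and l, the number f^u_{n,2l} of permutations π of {1,…,4n} satisfying π = π⁻¹ and π = ι∘π⁻¹∘ι, with π(x) ≠ x and π(x) ≠ ι(x) for all x, and having longest increasing subsequence of length at most 2l, equals E_{U∈U(l)} (Tr(U) + conj(Tr(U)))^{2n}, i.e. the 2n-th moment of twice the real part of the trace of a Haar-random l×l unitary matrix. -/

import Mathlib

open MeasureTheory Matrix

noncomputable section

/-- `lisLE π l` means the longest increasing subsequence of the permutation `π`
has length at most `l`. -/
def lisLE {N : ℕ} (π : Equiv.Perm (Fin N)) (l : ℕ) : Prop :=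
  ∀ (k : ℕ) (f : Fin k → Fin N), StrictMono f → StrictMono (fun i => π (f i)) → k ≤ l

/-- `f^u_{n,l}`: the number of permutations `π` of `{1,…,4n}` with `π = π⁻¹`,
`π = ι∘π⁻¹∘ι` (where `ι(x) = 4n+1-x`), `π(x) ≠ x` and `π(x) ≠ ι(x)` for all `x`,
whose longest increasing subsequence has length at most `l`. -/
def fuCount (n l : ℕ) : ℕ :=
  Nat.card {π : Equiv.Perm (Fin (4 * n)) //
    π = π⁻¹ ∧ π = Fin.revPerm * π⁻¹ * Fin.revPerm ∧
    (∀ x, π x ≠ x) ∧ (∀ x, π x ≠ Fin.revPerm x) ∧ lisLE π l}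

instance (l : ℕ) : MeasurableSpace (Matrix.unitaryGroup (Fin l) ℂ) := borel _
instance (l : ℕ) : BorelSpace (Matrix.unitaryGroup (Fin l) ℂ) := ⟨rfl⟩

/-- The standard symplectic form on `ℂ^l ⊕ ℂ^l`. -/
def symp (l : ℕ) : (Fin l ⊕ Fin l → ℂ) →ₗ[ℂ] (Fin l ⊕ Fin l → ℂ) →ₗ[ℂ] ℂ :=
  LinearMap.mk₂ ℂ
    (fun u v => ∑ i, (u (Sum.inl i) * v (Sum.inr i) - u (Sum.inr i) * v (Sum.inl i)))
    (fun u u' v => by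
      rw [← Finset.sum_add_distrib]
      exact Finset.sum_congr rfl fun i _ => by simp only [Pi.add_apply]; ring)
    (fun c u v => by
      rw [smul_eq_mul, Finset.mul_sum]
      exact Finset.sum_congr rfl fun i _ => by simp only [Pi.smul_apply, smul_eq_mul]; ring)
    (fun u v v' => by
      rw [← Finset.sum_add_distrib]
      exact Finset.sum_congr rfl fun i _ => by simp only [Pi.add_apply]; ring)
    (fun c u v => by
      rw [smul_eq_mul, Finset.mul_sum]
      exact Finset.sum_congr rfl fun i _ => by simp only [Pi.smul_apply, smul_eq_mul]; ring)

/-- The involution of `ℂ^l ⊕ ℂ^l` acting by `1` on the first summand and by `-1` on the second. -/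
def signFlip (l : ℕ) : (Fin l ⊕ Fin l → ℂ) →ₗ[ℂ] (Fin l ⊕ Fin l → ℂ) where
  toFun u := Sum.elim (fun i => u (Sum.inl i)) (fun i => -u (Sum.inr i))
  map_add' u v := by
    ext (i | i)
    · simp
    · simp [add_comm]
  map_smul' c u := by ext (i | i) <;> simp

theorem symp_apply {l : ℕ} (u v : Fin l ⊕ Fin l → ℂ) :
    symp l u v = ∑ i, (u (Sum.inl i) * v (Sum.inr i) - u (Sum.inr i) * v (Sum.inl i)) := rfl

theorem symp_neg_swap {l : ℕ} (u v : Fin l ⊕ Fin l → ℂ) : symp l u v = -symp l v u := by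
  rw [symp_apply, symp_apply, ← Finset.sum_neg_distrib]
  exact Finset.sum_congr rfl fun i _ => by ring

@[simp] theorem signFlip_inl {l : ℕ} (u : Fin l ⊕ Fin l → ℂ) (i : Fin l) :
    signFlip l u (Sum.inl i) = u (Sum.inl i) := rfl

@[simp] theorem signFlip_inr {l : ℕ} (u : Fin l ⊕ Fin l → ℂ) (i : Fin l) :
    signFlip l u (Sum.inr i) = -u (Sum.inr i) := rfl

@[simp] theorem signFlip_signFlip {l : ℕ} (u : Fin l ⊕ Fin l → ℂ) :
    signFlip l (signFlip l u) = u := by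
  ext (i | i) <;> simp

theorem symp_signFlip {l : ℕ} (u v : Fin l ⊕ Fin l → ℂ) :
    symp l (signFlip l u) (signFlip l v) = symp l v u := by
  rw [symp_apply, symp_apply]
  exact Finset.sum_congr rfl fun i _ => by simp only [signFlip_inl, signFlip_inr]; ring

/-- Perfect matchings of `Fin N` that commute with the reversal, with no edge joining a point to its
mirror image. -/
structure IsSymMatching {N : ℕ} (M : Equiv.Perm (Fin N)) : Prop where
  invol : ∀ x, M (M x) = x
  comm_rev : ∀ x, M x.rev = (M x).rev
  ne_self : ∀ x, M x ≠ x
  ne_rev : ∀ x, M x ≠ x.rev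

/-- The smallest element of the orbit of `x` under the matching `M` and the reversal. -/
def orbMin {N : ℕ} (M : Equiv.Perm (Fin N)) (x : Fin N) : Fin N :=
  min (min x (M x)) (min x.rev (M x).rev)

/-- Families of vectors indexed by `Fin N` for which the reversal acts by `signFlip`. -/
def IsMirrored {N l : ℕ} (w : Fin N → Fin l ⊕ Fin l → ℂ) : Prop :=
  ∀ x, w x.rev = signFlip l (w x)

/-- The product of the symplectic pairings over the edges of `M`, one edge for every pair of
mirror edges. -/
def matchProd {N l : ℕ} (M : Equiv.Perm (Fin N)) (w : Fin N → Fin l ⊕ Fin l → ℂ) : ℂ :=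
  ∏ x ∈ Finset.univ.filter (fun x => orbMin M x = x), symp l (w x) (w (M x))

section Orbits

variable {N : ℕ} {M : Equiv.Perm (Fin N)}

theorem orbMin_mem (M : Equiv.Perm (Fin N)) (x : Fin N) :
    orbMin M x = x ∨ orbMin M x = M x ∨ orbMin M x = x.rev ∨ orbMin M x = (M x).rev := by
  unfold orbMin
  rcases min_choice (min x (M x)) (min x.rev (M x).rev) with h | h <;> rw [h]
  · rcases min_choice x (M x) with h | h <;> simp [h]
  · rcases min_choice x.rev (M x).rev with h | h <;> simp [h]

theorem orbMin_apply (hM : IsSymMatching M) (x : Fin N) : orbMin M (M x) = orbMin M x := by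
  simp only [orbMin, hM.invol, min_comm]

theorem orbMin_rev (hM : IsSymMatching M) (x : Fin N) : orbMin M x.rev = orbMin M x := by
  simp only [orbMin, hM.comm_rev, Fin.rev_rev, min_comm]

theorem orbMin_orbMin (hM : IsSymMatching M) (x : Fin N) :
    orbMin M (orbMin M x) = orbMin M x := by
  rcases orbMin_mem M x with h | h | h | h
  · rw [h, h]
  · conv_lhs => rw [h, orbMin_apply hM]
  · conv_lhs => rw [h, orbMin_rev hM]
  · conv_lhs => rw [h, orbMin_rev hM, orbMin_apply hM]

theorem orbMin_eq_iff (hM : IsSymMatching M) (x y : Fin N) :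
    orbMin M x = orbMin M y ↔ x = y ∨ x = M y ∨ x = y.rev ∨ x = (M y).rev := by
  constructor
  · intro h
    have key : ∀ z, x = z ∨ M x = z ∨ x.rev = z ∨ (M x).rev = z →
        (x = z ∨ x = M z ∨ x = z.rev ∨ x = (M z).rev) := by
      rintro z (rfl | rfl | rfl | rfl) <;> simp [hM.invol, hM.comm_rev]
    have h1 := key (orbMin M x) (by
      rcases orbMin_mem M x with h | h | h | h <;> simp [h])
    rw [h] at h1
    rcases orbMin_mem M y with h2 | h2 | h2 | h2 <;> rw [h2] at h1 <;>
      (try simp only [hM.invol, hM.comm_rev, Fin.rev_rev] at h1) <;> tauto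
  · rintro (rfl | rfl | rfl | rfl) <;> simp only [orbMin_apply hM, orbMin_rev hM]

theorem symp_mirror (hM : IsSymMatching M) {l : ℕ} {w : Fin N → Fin l ⊕ Fin l → ℂ}
    (hw : IsMirrored w) (x : Fin N) :
    symp l (w x.rev) (w (M x.rev)) = symp l (w (M x)) (w x) := by
  rw [hM.comm_rev, hw, hw, symp_signFlip]

/-- The product of the pairings over any set of representatives of the edges agrees up to sign
with `matchProd`; the sign does not depend on the vectors. -/
theorem prod_transversal (hM : IsSymMatching M) (l : ℕ) {B : Type*} [Fintype B] (y : B → Fin N)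
    (hinj : ∀ k k', orbMin M (y k) = orbMin M (y k') → k = k')
    (hsurj : ∀ x, ∃ k, orbMin M (y k) = orbMin M x) :
    ∃ ε : ℂ, ε * ε = 1 ∧ ∀ w : Fin N → Fin l ⊕ Fin l → ℂ, IsMirrored w →
      ∏ k, symp l (w (y k)) (w (M (y k))) = ε * matchProd M w := by
  have hs : ∀ x, ∃ ε : ℂ, ε * ε = 1 ∧ ∀ w : Fin N → Fin l ⊕ Fin l → ℂ, IsMirrored w →
      symp l (w x) (w (M x)) = ε * symp l (w (orbMin M x)) (w (M (orbMin M x))) := by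
    intro x
    rcases orbMin_mem M x with h | h | h | h <;> rw [h]
    · exact ⟨1, by simp, fun w _ => by simp⟩
    · exact ⟨-1, by simp, fun w _ => by rw [hM.invol, symp_neg_swap]; simp⟩
    · exact ⟨-1, by simp, fun w hw => by rw [symp_mirror hM hw, symp_neg_swap]; simp⟩
    · exact ⟨1, by simp, fun w hw => by rw [symp_mirror hM hw, hM.invol]; simp⟩
  choose e he hw using hs
  refine ⟨∏ k, e (y k), ?_, fun w hmir => ?_⟩
  · rw [← Finset.prod_mul_distrib]
    exact Finset.prod_eq_one fun k _ => he _
  · rw [Finset.prod_congr rfl fun k _ => hw (y k) w hmir, Finset.prod_mul_distrib, matchProd]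
    congr 1
    refine Finset.prod_bij (fun k _ => orbMin M (y k)) ?_ ?_ ?_ ?_
    · intro k _
      simp [orbMin_orbMin hM]
    · intro k _ k' _ h
      exact hinj k k' h
    · intro x hx
      obtain ⟨k, hk⟩ := hsurj x
      exact ⟨k, Finset.mem_univ _, by rw [hk]; simpa using hx⟩
    · intro k _
      rfl

theorem matchProd_ne_zero_iff (hM : IsSymMatching M) {l : ℕ} {w : Fin N → Fin l ⊕ Fin l → ℂ}
    (hw : IsMirrored w) : matchProd M w ≠ 0 ↔ ∀ x, symp l (w x) (w (M x)) ≠ 0 := by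
  constructor
  · intro h x
    rw [matchProd, Finset.prod_ne_zero_iff] at h
    have h1 := h (orbMin M x) (by simp [orbMin_orbMin hM])
    rcases orbMin_mem M x with h2 | h2 | h2 | h2 <;> rw [h2] at h1
    · exact h1
    · rwa [hM.invol, symp_neg_swap, neg_ne_zero] at h1
    · rwa [symp_mirror hM hw, symp_neg_swap, neg_ne_zero] at h1
    · rwa [symp_mirror hM hw, hM.invol] at h1
  · intro h
    exact Finset.prod_ne_zero_iff.2 fun x _ => h x

/-- Conjugation by a permutation commuting with the reversal. -/
theorem IsSymMatching.conj (hM : IsSymMatching M) {θ : Equiv.Perm (Fin N)}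
    (hθ : ∀ x, θ x.rev = (θ x).rev) : IsSymMatching (θ * M * θ⁻¹) := by
  have hθ' : ∀ x, θ.symm x.rev = (θ.symm x).rev := fun x => by
    rw [Equiv.symm_apply_eq, hθ, Equiv.apply_symm_apply]
  refine ⟨fun x => ?_, fun x => ?_, fun x h => ?_, fun x h => ?_⟩
  · simp [hM.invol]
  · simp [hθ', hM.comm_rev, hθ]
  · exact hM.ne_self (θ.symm x) ((Equiv.eq_symm_apply θ).2 h)
  · exact hM.ne_rev (θ.symm x) (by rw [← hθ']; exact (Equiv.eq_symm_apply θ).2 h)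

theorem matchProd_comp_perm (hM : IsSymMatching M) {θ : Equiv.Perm (Fin N)}
    (hθ : ∀ x, θ x.rev = (θ x).rev) (l : ℕ) :
    ∃ ε : ℂ, ε * ε = 1 ∧ ∀ w : Fin N → Fin l ⊕ Fin l → ℂ, IsMirrored w →
      matchProd M (fun x => w (θ x)) = ε * matchProd (θ * M * θ⁻¹) w := by
  have hM' := hM.conj hθ
  have horb : ∀ x y, orbMin (θ * M * θ⁻¹) (θ x) = orbMin (θ * M * θ⁻¹) (θ y) ↔
      orbMin M x = orbMin M y := by
    intro x y
    rw [orbMin_eq_iff hM, orbMin_eq_iff hM']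
    simp [← hθ]
  obtain ⟨ε, hε, h⟩ := prod_transversal hM' l
    (B := {x // x ∈ Finset.univ.filter (fun x => orbMin M x = x)}) (fun k => θ k)
    (fun k k' h => by
      have h1 := (horb _ _).1 h
      have hk := (Finset.mem_filter.1 k.2).2
      have hk' := (Finset.mem_filter.1 k'.2).2
      rw [hk, hk'] at h1
      exact Subtype.ext h1)
    (fun x => ⟨⟨orbMin M (θ.symm x), by simp [orbMin_orbMin hM]⟩, by
      conv_rhs => rw [← Equiv.apply_symm_apply θ x]
      rw [horb, orbMin_orbMin hM]⟩)
  refine ⟨ε, hε, fun w hw => ?_⟩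
  rw [← h w hw, matchProd, ← Finset.prod_coe_sort]
  simp

end Orbits

section Depth

variable {N : ℕ} {M : Equiv.Perm (Fin N)}

theorem lisLE_iff_card_le (M : Equiv.Perm (Fin N)) (L : ℕ) :
    lisLE (Fin.revPerm * M) L ↔ ∀ s : Finset (Fin N), StrictAntiOn M s → s.card ≤ L := by
  constructor
  · intro h s hs
    refine h s.card (s.orderEmbOfFin rfl) (s.orderEmbOfFin rfl).strictMono fun i j hij => ?_
    simp only [Equiv.Perm.mul_apply, Fin.revPerm_apply]
    rw [Fin.rev_lt_rev]
    exact hs (s.orderEmbOfFin_mem rfl i) (s.orderEmbOfFin_mem rfl j)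
      ((s.orderEmbOfFin rfl).strictMono hij)
  · intro h k f hf hfm
    have h1 := h (Finset.univ.image f) (by
      intro a ha b hb hab
      simp only [Finset.coe_image, Finset.coe_univ, Set.image_univ, Set.mem_range] at ha hb
      obtain ⟨i, rfl⟩ := ha
      obtain ⟨j, rfl⟩ := hb
      have h2 := hfm (hf.lt_iff_lt.1 hab)
      simpa [Fin.rev_lt_rev] using h2)
    rwa [Finset.card_image_of_injective _ hf.injective, Finset.card_univ, Fintype.card_fin] at h1

/-- The largest size of a set with greatest element `x` on which `M` is strictly decreasing. -/
def depth (M : Equiv.Perm (Fin N)) (x : Fin N) : ℕ := by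
  classical
  exact (Finset.univ.filter (fun s : Finset (Fin N) =>
    StrictAntiOn M s ∧ x ∈ s ∧ ∀ y ∈ s, y ≤ x)).sup Finset.card

theorem card_le_depth {x : Fin N} {s : Finset (Fin N)} (hs : StrictAntiOn M s) (hx : x ∈ s)
    (hle : ∀ y ∈ s, y ≤ x) : s.card ≤ depth M x := by
  classical
  exact Finset.le_sup (f := Finset.card) (Finset.mem_filter.2 ⟨Finset.mem_univ s, hs, hx, hle⟩)

theorem exists_card_eq_depth (M : Equiv.Perm (Fin N)) (x : Fin N) :
    ∃ s : Finset (Fin N), StrictAntiOn M s ∧ x ∈ s ∧ (∀ y ∈ s, y ≤ x) ∧ s.card = depth M x := by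
  classical
  have hne : (Finset.univ.filter (fun s : Finset (Fin N) =>
      StrictAntiOn M s ∧ x ∈ s ∧ ∀ y ∈ s, y ≤ x)).Nonempty :=
    ⟨{x}, by simp⟩
  obtain ⟨s, hs, h⟩ := Finset.exists_mem_eq_sup _ hne Finset.card
  obtain ⟨-, h1, h2, h3⟩ := Finset.mem_filter.1 hs
  exact ⟨s, h1, h2, h3, h.symm⟩

theorem one_le_depth (M : Equiv.Perm (Fin N)) (x : Fin N) : 1 ≤ depth M x :=
  card_le_depth (s := {x}) (by simp) (by simp) (by simp)

theorem depth_lt_depth {x y : Fin N} (hxy : x < y) (hM : M y < M x) :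
    depth M x < depth M y := by
  obtain ⟨s, hs, hx, hle, hc⟩ := exists_card_eq_depth M x
  have hy : y ∉ s := fun h => absurd (hle y h) (not_le.2 hxy)
  have hlt : ∀ a ∈ s, a < y ∧ M y < M a := fun a ha =>
    ⟨(hle a ha).trans_lt hxy, hM.trans_le (hs.antitoneOn ha hx (hle a ha))⟩
  have h1 : (insert y s).card ≤ depth M y := by
    refine card_le_depth ?_ (Finset.mem_insert_self _ _) ?_
    · intro a ha b hb hab
      simp only [Finset.coe_insert, Set.mem_insert_iff, Finset.mem_coe] at ha hb
      rcases ha with rfl | ha <;> rcases hb with rfl | hb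
      · exact absurd hab (lt_irrefl _)
      · exact absurd hab (hlt b hb).1.not_gt
      · exact (hlt a ha).2
      · exact hs ha hb hab
    · intro a ha
      rcases Finset.mem_insert.1 ha with rfl | ha
      · exact le_rfl
      · exact (hlt a ha).1.le
  rw [Finset.card_insert_of_notMem hy, hc] at h1
  exact h1

theorem depth_rev_apply (hM : IsSymMatching M) (x : Fin N) : depth M (M x).rev = depth M x := by
  have key : ∀ x, depth M x ≤ depth M (M x).rev := by
    intro x
    obtain ⟨s, hs, hx, hle, hc⟩ := exists_card_eq_depth M x
    have hinj : Function.Injective fun y => (M y).rev :=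
      Fin.rev_injective.comp M.injective
    rw [← hc, ← Finset.card_image_of_injective s hinj]
    refine card_le_depth ?_ (Finset.mem_image_of_mem _ hx) ?_
    · intro a ha b hb hab
      simp only [Finset.coe_image, Set.mem_image, Finset.mem_coe] at ha hb
      obtain ⟨a, ha, rfl⟩ := ha
      obtain ⟨b, hb, rfl⟩ := hb
      rw [Fin.rev_lt_rev] at hab
      rw [hM.comm_rev, hM.comm_rev, hM.invol, hM.invol, Fin.rev_lt_rev]
      exact (hs.lt_iff_gt hb ha).1 hab
    · intro a ha
      obtain ⟨b, hb, rfl⟩ := Finset.mem_image.1 ha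
      rw [Fin.rev_le_rev]
      exact hs.antitoneOn hb hx (hle b hb)
  refine le_antisymm ?_ (key x)
  have h := key (M x).rev
  rwa [hM.comm_rev, hM.invol, Fin.rev_rev] at h

theorem depth_le (hM : IsSymMatching M) {l : ℕ} (hl : lisLE (Fin.revPerm * M) (2 * l)) {x : Fin N}
    (hx : x < M x) : depth M x ≤ l := by
  rw [lisLE_iff_card_le] at hl
  obtain ⟨s, hs, hxs, hle, hc⟩ := exists_card_eq_depth M x
  have hlt : ∀ a ∈ s, ∀ b ∈ s, a < M b := fun a ha b hb =>
    (hle a ha).trans_lt (hx.trans_le (hs.antitoneOn hb hxs (hle b hb)))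
  have hd : Disjoint s (s.image M) := by
    rw [Finset.disjoint_left]
    intro a ha ha'
    obtain ⟨b, hb, rfl⟩ := Finset.mem_image.1 ha'
    exact lt_irrefl _ (hlt _ ha b hb)
  have h := hl (s ∪ s.image M) (by
    intro a ha b hb hab
    simp only [Finset.coe_union, Finset.coe_image, Set.mem_union, Finset.mem_coe,
      Set.mem_image] at ha hb
    rcases ha with ha | ⟨a, ha, rfl⟩ <;> rcases hb with hb | ⟨b, hb, rfl⟩
    · exact hs ha hb hab
    · rw [hM.invol]
      exact hlt b hb a ha
    · exact absurd hab (hlt b hb a ha).not_gt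
    · rw [hM.invol, hM.invol]
      exact (hs.lt_iff_gt ha hb).1 hab)
  rw [Finset.card_union_of_disjoint hd, Finset.card_image_of_injective _ M.injective, hc] at h
  omega

/-- The depth of the left endpoint of the edge at `x`. -/
def edgeDepth (M : Equiv.Perm (Fin N)) (x : Fin N) : ℕ :=
  depth M (if x < M x then x else M x)

theorem edgeDepth_rev (hM : IsSymMatching M) (x : Fin N) :
    edgeDepth M x.rev = edgeDepth M x := by
  unfold edgeDepth
  simp only [hM.comm_rev, Fin.rev_lt_rev]
  rcases lt_or_gt_of_ne (hM.ne_self x) with h | h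
  · rw [if_pos h, if_neg h.not_gt, ← depth_rev_apply hM (M x), hM.invol]
  · rw [if_neg h.not_gt, if_pos h, depth_rev_apply hM]

theorem edgeDepth_apply (hM : IsSymMatching M) (x : Fin N) :
    edgeDepth M (M x) = edgeDepth M x := by
  unfold edgeDepth
  rw [hM.invol]
  rcases lt_or_gt_of_ne (hM.ne_self x) with h | h
  · rw [if_pos h, if_neg h.not_gt]
  · rw [if_neg h.not_gt, if_pos h]

theorem edgeDepth_pos (M : Equiv.Perm (Fin N)) (x : Fin N) : 1 ≤ edgeDepth M x :=
  one_le_depth _ _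

theorem edgeDepth_le (hM : IsSymMatching M) {l : ℕ} (hl : lisLE (Fin.revPerm * M) (2 * l))
    (x : Fin N) : edgeDepth M x ≤ l := by
  unfold edgeDepth
  refine depth_le hM hl ?_
  rcases lt_or_gt_of_ne (hM.ne_self x) with h | h
  · rw [if_neg h.not_gt, hM.invol]
    exact h
  · rw [if_pos h]
    exact h

end Depth

/-- The vector `e_c + f_c` (zero unless `1 ≤ c ≤ l`). -/
def openerVec (l c : ℕ) : Fin l ⊕ Fin l → ℂ :=
  Sum.elim (fun i => if (i : ℕ) + 1 = c then 1 else 0) (fun i => if (i : ℕ) + 1 = c then 1 else 0)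

theorem symp_openerVec_self (l c d : ℕ) : symp l (openerVec l c) (openerVec l d) = 0 := by
  rw [symp_apply]
  exact Finset.sum_eq_zero fun i _ => by simp [openerVec]

theorem symp_openerVec_signFlip_of_ne {l c d : ℕ} (h : c ≠ d) :
    symp l (openerVec l c) (signFlip l (openerVec l d)) = 0 := by
  rw [symp_apply]
  refine Finset.sum_eq_zero fun i _ => ?_
  simp only [openerVec, signFlip_inl, signFlip_inr, Sum.elim_inl, Sum.elim_inr]
  split_ifs <;> first | omega | simp

theorem symp_openerVec_signFlip_ne_zero {l c : ℕ} (h1 : 1 ≤ c) (hl : c ≤ l) :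
    symp l (openerVec l c) (signFlip l (openerVec l c)) ≠ 0 := by
  rw [symp_apply, Finset.sum_eq_single (⟨c - 1, by omega⟩ : Fin l)]
  · have h : c - 1 + 1 = c := by omega
    simp only [openerVec, signFlip_inl, signFlip_inr, Sum.elim_inl, Sum.elim_inr, h, if_true]
    norm_num
  · intro i _ hi
    have : (i : ℕ) + 1 ≠ c := fun h => hi (Fin.ext (by simp only; omega))
    simp [openerVec, this]
  · simp

section TestVectors

variable {N : ℕ} {M : Equiv.Perm (Fin N)}

/-- Vectors on which `matchProd M` does not vanish: left endpoints of edges of depth `c` get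
`e_c + f_c`, right endpoints get `e_c - f_c`. -/
def testVec (l : ℕ) (M : Equiv.Perm (Fin N)) (x : Fin N) : Fin l ⊕ Fin l → ℂ :=
  if x < M x then openerVec l (edgeDepth M x) else signFlip l (openerVec l (edgeDepth M x))

theorem testVec_isMirrored (hM : IsSymMatching M) (l : ℕ) : IsMirrored (testVec l M) := by
  intro x
  unfold testVec
  simp only [hM.comm_rev, Fin.rev_lt_rev, edgeDepth_rev hM]
  rcases lt_or_gt_of_ne (hM.ne_self x) with h | h
  · rw [if_pos h, if_neg h.not_gt, signFlip_signFlip]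
  · rw [if_neg h.not_gt, if_pos h]

theorem matchProd_testVec_ne_zero (hM : IsSymMatching M) {l : ℕ}
    (hl : lisLE (Fin.revPerm * M) (2 * l)) : matchProd M (testVec l M) ≠ 0 := by
  rw [matchProd_ne_zero_iff hM (testVec_isMirrored hM l)]
  intro x
  have h0 := symp_openerVec_signFlip_ne_zero (edgeDepth_pos M x) (edgeDepth_le hM hl x)
  unfold testVec
  rw [edgeDepth_apply hM, hM.invol]
  rcases lt_or_gt_of_ne (hM.ne_self x) with h | h
  · rw [if_pos h, if_neg h.not_gt, symp_neg_swap]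
    exact neg_ne_zero.2 h0
  · rw [if_neg h.not_gt, if_pos h]
    exact h0

theorem edgeDepth_eq_of_symp_testVec_ne_zero {l : ℕ} {x y : Fin N}
    (h : symp l (testVec l M x) (testVec l M y) ≠ 0) :
    edgeDepth M x = edgeDepth M y ∧ (x < M x ↔ ¬ y < M y) := by
  unfold testVec at h
  by_cases hx : x < M x <;> by_cases hy : y < M y
  · rw [if_pos hx, if_pos hy, symp_openerVec_self] at h
    exact absurd rfl h
  · rw [if_pos hx, if_neg hy] at h
    exact ⟨by_contra fun hne => h (symp_openerVec_signFlip_of_ne hne), by simp [hx, hy]⟩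
  · rw [if_neg hx, if_pos hy, symp_neg_swap, neg_ne_zero] at h
    exact ⟨by_contra fun hne => h (symp_openerVec_signFlip_of_ne (Ne.symm hne)), by simp [hx, hy]⟩
  · rw [if_neg hx, if_neg hy, symp_signFlip, symp_openerVec_self] at h
    exact absurd rfl h

/-- Triangularity: if `matchProd M'` does not vanish on the test vectors of `M`, then `M` is at most
`M'` in the lexicographic order. -/
theorem toLex_le_of_matchProd_testVec_ne_zero (hM : IsSymMatching M) {M' : Equiv.Perm (Fin N)}
    (hM' : IsSymMatching M') {l : ℕ} (h : matchProd M' (testVec l M) ≠ 0) :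
    toLex (M : Fin N → Fin N) ≤ toLex (M' : Fin N → Fin N) := by
  rw [matchProd_ne_zero_iff hM' (testVec_isMirrored hM l)] at h
  by_contra hlt
  rw [not_le] at hlt
  obtain ⟨q, hq, hlt⟩ := hlt
  replace hq : ∀ j, j < q → M' j = M j := hq
  replace hlt : M' q < M q := hlt
  obtain ⟨hd, hiff⟩ := edgeDepth_eq_of_symp_testVec_ne_zero (h q)
  by_cases ho : q < M q
  · have hcl : ¬ M' q < M (M' q) := hiff.1 ho
    have hxz : M (M' q) < M' q := lt_of_le_of_ne (not_lt.1 hcl) (hM.ne_self _)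
    rcases lt_trichotomy (M (M' q)) q with hx | hx | hx
    · have h1 := hq _ hx
      rw [hM.invol] at h1
      have h2 := M'.injective h1
      rw [h2] at hx
      exact lt_irrefl _ hx
    · rw [← hM.invol (M' q), hx] at hlt
      exact lt_irrefl _ hlt
    · unfold edgeDepth at hd
      rw [if_pos ho, if_neg hcl] at hd
      have := depth_lt_depth hx (by rwa [hM.invol])
      omega
  · have h1 : M q < q := lt_of_le_of_ne (not_lt.1 ho) (hM.ne_self _)
    have h2 := hq _ h1
    rw [hM.invol] at h2
    have h3 : M' q = M q := by
      conv_lhs => rw [← h2]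
      rw [hM'.invol]
    exact hlt.ne h3

end TestVectors

/-- A product of bilinear forms in disjoint pairs of variables, as a multilinear map. -/
def pairProd {ι V : Type*} [Fintype ι] [AddCommGroup V] [Module ℂ V] (B : ι → V →ₗ[ℂ] V →ₗ[ℂ] ℂ) :
    MultilinearMap ℂ (fun _ : ι × Bool => V) ℂ := by
  classical
  have key : ∀ (u : ι × Bool → V) (k : ι × Bool) (x : V),
      ∏ i, B i (Function.update u k x (i, false)) (Function.update u k x (i, true)) =
        B k.1 (Function.update u k x (k.1, false)) (Function.update u k x (k.1, true)) *
          ∏ i ∈ Finset.univ.erase k.1, B i (u (i, false)) (u (i, true)) := by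
    intro u k x
    rw [← Finset.mul_prod_erase _ _ (Finset.mem_univ k.1)]
    congr 1
    refine Finset.prod_congr rfl fun i hi => ?_
    have hne : ∀ b, (i, b) ≠ k := fun b h => (Finset.ne_of_mem_erase hi) (by rw [← h])
    rw [Function.update_of_ne (hne _), Function.update_of_ne (hne _)]
  exact MultilinearMap.mk' (fun u => ∏ i, B i (u (i, false)) (u (i, true)))
    (by
      rintro u ⟨i, b⟩ x y
      rw [key, key, key, ← add_mul]
      cases b <;> simp)
    (by
      rintro u ⟨i, b⟩ c x
      rw [key, key, smul_eq_mul, ← mul_assoc]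
      cases b <;> simp)

theorem pairProd_apply {ι V : Type*} [Fintype ι] [AddCommGroup V] [Module ℂ V]
    (B : ι → V →ₗ[ℂ] V →ₗ[ℂ] ℂ) (u : ι × Bool → V) :
    pairProd B u = ∏ i, B i (u (i, false)) (u (i, true)) := rfl

/-- The Pfaffian of the Gram matrix of more than `2 l` vectors in the `2 l`-dimensional symplectic
space vanishes. -/
theorem sum_sign_mul_prod_symp_eq_zero {ι : Type*} [Fintype ι] [DecidableEq ι] {l : ℕ}
    (hcard : l < Fintype.card ι) (u : ι × Bool → Fin l ⊕ Fin l → ℂ) :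
    ∑ σ : Equiv.Perm (ι × Bool), ((Equiv.Perm.sign σ : ℤ) : ℂ) *
      ∏ i, symp l (u (σ (i, false))) (u (σ (i, true))) = 0 := by
  have h := (MultilinearMap.alternatization (pairProd fun _ : ι => symp l)).map_linearDependent u
    (fun hli => by
      have := hli.fintype_card_le_finrank
      simp at this
      omega)
  rw [MultilinearMap.alternatization_apply] at h
  rw [← h]
  refine Finset.sum_congr rfl fun σ _ => ?_
  rw [MultilinearMap.domDomCongr_apply, pairProd_apply, Units.smul_def, zsmul_eq_mul]

theorem prod_symp_comp_of_comm {ι : Type*} [Fintype ι] [DecidableEq ι] {l : ℕ}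
    (σ : Equiv.Perm (ι × Bool)) (hσ : ∀ i b, σ (i, !b) = ((σ (i, b)).1, !(σ (i, b)).2))
    (u : ι × Bool → Fin l ⊕ Fin l → ℂ) :
    ∏ i, symp l (u (σ (i, false))) (u (σ (i, true))) =
      ((Equiv.Perm.sign σ : ℤ) : ℂ) * ∏ i, symp l (u (i, false)) (u (i, true)) := by
  have hσt : ∀ i, σ (i, true) = ((σ (i, false)).1, !(σ (i, false)).2) := fun i => hσ i false
  have hinj : Function.Injective fun i => (σ (i, false)).1 := by
    intro i j hij
    simp only at hij
    by_cases hb : (σ (i, false)).2 = (σ (j, false)).2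
    · exact congrArg Prod.fst (σ.injective (Prod.ext hij hb))
    · have h : σ (i, false) = σ (j, true) := by
        rw [hσt]
        refine Prod.ext hij ?_
        revert hb
        cases (σ (i, false)).2 <;> cases (σ (j, false)).2 <;> simp
      exact congrArg Prod.fst (σ.injective h)
  let ρ : Equiv.Perm ι := Equiv.ofBijective _ (Finite.injective_iff_bijective.1 hinj)
  have hρ : ∀ i, ρ i = (σ (i, false)).1 := fun i => rfl
  let τ : ι → Equiv.Perm Bool := fun i => if (σ (i, false)).2 then Equiv.swap false true else 1
  have hdec : σ = Equiv.prodCongrLeft (fun _ : Bool => ρ) * Equiv.prodCongrRight τ := by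
    ext1 ⟨i, b⟩
    rw [Equiv.Perm.mul_apply, Equiv.prodCongrRight_apply, Equiv.prodCongrLeft_apply]
    refine Prod.ext ?_ ?_
    · cases b
      · rfl
      · rw [hσt]; rfl
    · simp only [τ]
      cases b
      · cases h : (σ (i, false)).2 <;> simp
      · rw [hσt]
        cases h : (σ (i, false)).2 <;> simp
  have hsign : ((Equiv.Perm.sign σ : ℤ) : ℂ) = ∏ i, if (σ (i, false)).2 then (-1 : ℂ) else 1 := by
    conv_lhs => rw [hdec]
    rw [map_mul, Equiv.Perm.sign_prodCongrLeft, Equiv.Perm.sign_prodCongrRight,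
      Fintype.prod_bool, Int.units_mul_self, one_mul]
    push_cast
    refine Finset.prod_congr rfl fun i _ => ?_
    simp only [τ]
    cases h : (σ (i, false)).2 <;> simp
  rw [hsign, ← Equiv.prod_comp ρ fun i => symp l (u (i, false)) (u (i, true)),
    ← Finset.prod_mul_distrib]
  refine Finset.prod_congr rfl fun i _ => ?_
  rw [hσt, hρ, show u (σ (i, false)) = u ((σ (i, false)).1, (σ (i, false)).2) from rfl]
  cases h : (σ (i, false)).2
  · simp
  · simp only [Bool.not_true, if_true]
    rw [symp_neg_swap]
    ring

/-- A family of nested edges of `M`, with endpoints `pt (i, false)` and `pt (i, true)`, that is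
disjoint from its mirror image. -/
structure IsNesting {N : ℕ} {ι : Type*} (M : Equiv.Perm (Fin N)) (pt : ι × Bool → Fin N) :
    Prop where
  injective : Function.Injective pt
  apply_pt : ∀ i b, M (pt (i, b)) = pt (i, !b)
  anti : ∀ x y, pt x < pt y → M (pt y) < M (pt x)
  rev_ne : ∀ x y, (pt x).rev ≠ pt y

namespace IsNesting

variable {N : ℕ} {ι : Type*} {M : Equiv.Perm (Fin N)} {pt : ι × Bool → Fin N}

/-- The points of a nesting together with their mirror images. -/
def emb (h : IsNesting M pt) : (ι × Bool) × Bool ↪ Fin N where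
  toFun x := if x.2 then (pt x.1).rev else pt x.1
  inj' := by
    rintro ⟨x, b⟩ ⟨y, c⟩ hxy
    cases b <;> cases c <;> simp only [if_true, Bool.false_eq_true, if_false] at hxy
    · rw [h.injective hxy]
    · exact absurd hxy.symm (h.rev_ne _ _)
    · exact absurd hxy (h.rev_ne _ _)
    · rw [h.injective (Fin.rev_injective hxy)]

variable [Fintype ι]

/-- The permutation of all points, commuting with the reversal, induced by a permutation of the
points of a nesting. -/
def extend (h : IsNesting M pt) (σ : Equiv.Perm (ι × Bool)) : Equiv.Perm (Fin N) :=
  Equiv.Perm.viaFintypeEmbedding (Equiv.prodCongr σ (Equiv.refl Bool) : Equiv.Perm _) h.emb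

theorem extend_pt (h : IsNesting M pt) (σ : Equiv.Perm (ι × Bool)) (x : ι × Bool) :
    h.extend σ (pt x) = pt (σ x) :=
  Equiv.Perm.viaFintypeEmbedding_apply_image (Equiv.prodCongr σ (Equiv.refl Bool) : Equiv.Perm _)
    h.emb (x, false)

theorem extend_rev_pt (h : IsNesting M pt) (σ : Equiv.Perm (ι × Bool)) (x : ι × Bool) :
    h.extend σ (pt x).rev = (pt (σ x)).rev :=
  Equiv.Perm.viaFintypeEmbedding_apply_image (Equiv.prodCongr σ (Equiv.refl Bool) : Equiv.Perm _)
    h.emb (x, true)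

theorem extend_of_ne (h : IsNesting M pt) (σ : Equiv.Perm (ι × Bool)) {z : Fin N}
    (h1 : ∀ x, z ≠ pt x) (h2 : ∀ x, z ≠ (pt x).rev) : h.extend σ z = z := by
  refine Equiv.Perm.viaFintypeEmbedding_apply_notMem_range _ _ ?_
  rintro ⟨⟨x, b⟩, rfl⟩
  cases b
  · exact h1 x rfl
  · exact h2 x rfl

theorem extend_rev (h : IsNesting M pt) (σ : Equiv.Perm (ι × Bool)) (z : Fin N) :
    h.extend σ z.rev = (h.extend σ z).rev := by
  by_cases h1 : ∃ x, z = pt x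
  · obtain ⟨x, rfl⟩ := h1
    rw [extend_pt, extend_rev_pt]
  by_cases h2 : ∃ x, z = (pt x).rev
  · obtain ⟨x, rfl⟩ := h2
    rw [Fin.rev_rev, extend_pt, extend_rev_pt, Fin.rev_rev]
  push Not at h1 h2
  rw [extend_of_ne h σ h1 h2, extend_of_ne h σ]
  · intro x hx
    exact h2 x (by rw [← hx, Fin.rev_rev])
  · intro x hx
    exact h1 x (Fin.rev_injective hx)

/-- Permuting the points of a nesting makes the matching lexicographically smaller. -/
theorem toLex_conj_lt (h : IsNesting M pt) (hM : IsSymMatching M) (σ : Equiv.Perm (ι × Bool))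
    (hne : h.extend σ * M * (h.extend σ)⁻¹ ≠ M) :
    toLex ((h.extend σ * M * (h.extend σ)⁻¹ : Equiv.Perm (Fin N)) : Fin N → Fin N) <
      toLex (M : Fin N → Fin N) := by
  set θ := h.extend σ with hθ
  have hM' : IsSymMatching (θ * M * θ⁻¹) := hM.conj (h.extend_rev σ)
  have hpt : ∀ x, ∃ y, (θ * M * θ⁻¹) (pt x) = pt y := by
    intro x
    have h1 : θ.symm (pt x) = pt (σ.symm x) := by
      rw [Equiv.symm_apply_eq, hθ, extend_pt, Equiv.apply_symm_apply]
    refine ⟨σ ((σ.symm x).1, !(σ.symm x).2), ?_⟩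
    change θ (M (θ.symm (pt x))) = _
    rw [h1, show pt (σ.symm x) = pt ((σ.symm x).1, (σ.symm x).2) from rfl, h.apply_pt]
    exact h.extend_pt σ _
  have hout : ∀ z, (∀ x, z ≠ pt x) → (∀ x, z ≠ (pt x).rev) → (θ * M * θ⁻¹) z = M z := by
    intro z h1 h2
    have h3 : θ.symm z = z := by
      rw [Equiv.symm_apply_eq, hθ, extend_of_ne h σ h1 h2]
    change θ (M (θ.symm z)) = _
    rw [h3, hθ]
    refine extend_of_ne h σ ?_ ?_
    · rintro ⟨i, b⟩ hx
      exact h1 (i, !b) (by rw [← h.apply_pt, ← hx, hM.invol])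
    · rintro ⟨i, b⟩ hx
      exact h2 (i, !b) (by rw [← h.apply_pt, ← hM.comm_rev, ← hx, hM.invol])
  by_contra hlt
  have hlt := lt_of_le_of_ne (not_lt.1 hlt) fun heq =>
    hne (DFunLike.coe_injective (toLex_inj.1 heq.symm))
  obtain ⟨q, hq, hlt⟩ := hlt
  generalize θ * M * θ⁻¹ = M' at *
  replace hq : ∀ j, j < q → M j = M' j := hq
  replace hlt : M q < M' q := hlt
  have key : ¬ M (M' q) < q := by
    intro hr
    have h1 := hq _ hr
    rw [hM.invol] at h1
    have h2 := M'.injective h1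
    rw [← h2] at hr
    exact lt_irrefl _ hr
  by_cases h1 : ∃ x, q = pt x
  · obtain ⟨⟨i, b⟩, rfl⟩ := h1
    obtain ⟨y, hy⟩ := hpt (i, b)
    apply key
    rw [hy, h.apply_pt] at hlt
    rw [hy]
    have := h.anti _ _ hlt
    rwa [h.apply_pt i, Bool.not_not] at this
  by_cases h2 : ∃ x, q = (pt x).rev
  · obtain ⟨⟨i, b⟩, rfl⟩ := h2
    obtain ⟨y, hy⟩ := hpt (i, b)
    apply key
    rw [hM'.comm_rev, hy, hM.comm_rev, Fin.rev_lt_rev, h.apply_pt] at hlt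
    rw [hM'.comm_rev, hy, hM.comm_rev, Fin.rev_lt_rev]
    have := h.anti _ _ hlt
    rwa [h.apply_pt i, Bool.not_not] at this
  push Not at h1 h2
  exact hlt.ne (hout q h1 h2).symm

/-- The edges of the nesting can be split off from `matchProd`. -/
theorem exists_factor (h : IsNesting M pt) (hM : IsSymMatching M) (l : ℕ) :
    ∃ ε : ℂ, ε * ε = 1 ∧ ∀ w : Fin N → Fin l ⊕ Fin l → ℂ, IsMirrored w →
      ∃ R : ℂ, ∀ σ : Equiv.Perm (ι × Bool),
        (∏ i, symp l (w (pt (σ (i, false)))) (w (pt (σ (i, true))))) * R =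
          ε * matchProd M (fun x => w (h.extend σ x)) := by
  let y : ι ⊕ {x // orbMin M x = x ∧ ∀ i, orbMin M (pt (i, false)) ≠ x} → Fin N :=
    Sum.elim (fun i => pt (i, false)) Subtype.val
  obtain ⟨ε, hε, hprod⟩ := prod_transversal hM l y (by
    rintro (i | ⟨x, hx, hx'⟩) (j | ⟨z, hz, hz'⟩) hij <;>
      simp only [y, Sum.elim_inl, Sum.elim_inr] at hij
    · rw [orbMin_eq_iff hM, h.apply_pt] at hij
      rcases hij with hij | hij | hij | hij
      · exact congrArg Sum.inl (Prod.ext_iff.1 (h.injective hij)).1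
      · simpa using (Prod.ext_iff.1 (h.injective hij)).2
      · exact absurd hij.symm (h.rev_ne _ _)
      · exact absurd hij.symm (h.rev_ne _ _)
    · exact absurd (hij.trans hz) (hz' i)
    · exact absurd (hij.symm.trans hx) (hx' j)
    · rw [hx, hz] at hij
      subst hij
      rfl) (by
    intro x
    by_cases hx : ∃ i, orbMin M (pt (i, false)) = orbMin M x
    · exact ⟨Sum.inl hx.choose, hx.choose_spec⟩
    · push Not at hx
      exact ⟨Sum.inr ⟨orbMin M x, orbMin_orbMin hM x, hx⟩, orbMin_orbMin hM x⟩)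
  have hfar : ∀ x : {x // orbMin M x = x ∧ ∀ i, orbMin M (pt (i, false)) ≠ x},
      ∀ p : ι × Bool, orbMin M x ≠ orbMin M (pt p) := by
    rintro ⟨x, hx, hx'⟩ ⟨i, b⟩ he
    cases b
    · exact hx' i (he.symm.trans hx)
    · rw [show pt (i, true) = M (pt (i, false)) from (h.apply_pt i false).symm,
        orbMin_apply hM] at he
      exact hx' i (he.symm.trans hx)
  refine ⟨ε, hε, fun w hw => ⟨∏ x : {x // orbMin M x = x ∧ ∀ i, orbMin M (pt (i, false)) ≠ x},
    symp l (w x) (w (M x)), fun σ => ?_⟩⟩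
  rw [← hprod (fun x => w (h.extend σ x)) fun x => by simp only [h.extend_rev, hw _],
    Fintype.prod_sum_type]
  congr 1
  · refine Finset.prod_congr rfl fun i _ => ?_
    simp only [y, Sum.elim_inl]
    rw [h.apply_pt, h.extend_pt, h.extend_pt, Bool.not_false]
  · refine Finset.prod_congr rfl fun x _ => ?_
    simp only [y, Sum.elim_inr]
    have h1 := hfar x
    rw [h.extend_of_ne σ, h.extend_of_ne σ]
    · exact fun p hp => h1 p (by rw [← hp, orbMin_apply hM])
    · exact fun p hp => h1 p (by rw [← orbMin_rev hM (pt p), ← hp, orbMin_apply hM])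
    · exact fun p hp => h1 p (by rw [← hp])
    · exact fun p hp => h1 p (by rw [← orbMin_rev hM (pt p), ← hp])

end IsNesting

theorem IsNesting.extend_one {N : ℕ} {ι : Type*} [Fintype ι] {M : Equiv.Perm (Fin N)}
    {pt : ι × Bool → Fin N} (h : IsNesting M pt) (z : Fin N) : h.extend 1 z = z := by
  by_cases h1 : ∃ x, z = pt x
  · obtain ⟨x, rfl⟩ := h1
    exact h.extend_pt 1 x
  by_cases h2 : ∃ x, z = (pt x).rev
  · obtain ⟨x, rfl⟩ := h2
    exact h.extend_rev_pt 1 x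
  push Not at h1 h2
  exact h.extend_of_ne 1 h1 h2

/-- The values of `matchProd M` on a family `w` of arguments. -/
def matchVec {N l : ℕ} {A : Type*} (w : A → Fin N → Fin l ⊕ Fin l → ℂ) (M : Equiv.Perm (Fin N)) :
    A → ℂ :=
  fun a => matchProd M (w a)

/-- A matching with more than `l` nested edges is a combination of lexicographically smaller
matchings. -/
theorem matchVec_mem_span_of_isNesting {N l : ℕ} {A ι : Type*} [Fintype ι]
    {w : A → Fin N → Fin l ⊕ Fin l → ℂ} (hw : ∀ a, IsMirrored (w a)) {M : Equiv.Perm (Fin N)}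
    (hM : IsSymMatching M) {pt : ι × Bool → Fin N} (h : IsNesting M pt)
    (hcard : l < Fintype.card ι) :
    matchVec w M ∈ Submodule.span ℂ {v | ∃ M' : Equiv.Perm (Fin N), IsSymMatching M' ∧
      toLex (M' : Fin N → Fin N) < toLex (M : Fin N → Fin N) ∧ v = matchVec w M'} := by
  classical
  set S := Submodule.span ℂ {v | ∃ M' : Equiv.Perm (Fin N), IsSymMatching M' ∧
      toLex (M' : Fin N → Fin N) < toLex (M : Fin N → Fin N) ∧ v = matchVec w M'} with hS
  obtain ⟨ε, hε, hfac⟩ := h.exists_factor hM l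
  have hε0 : ε ≠ 0 := by rintro rfl; simp at hε
  have hsq : ∀ σ : Equiv.Perm (ι × Bool),
      ((Equiv.Perm.sign σ : ℤ) : ℂ) * ((Equiv.Perm.sign σ : ℤ) : ℂ) = 1 := fun σ => by
    rw [← Int.cast_mul, ← Units.val_mul, Int.units_mul_self]
    simp
  let v : Equiv.Perm (ι × Bool) → A → ℂ := fun σ a =>
    ((Equiv.Perm.sign σ : ℤ) : ℂ) * matchProd M fun x => w a (h.extend σ x)
  have hsum : ∑ σ, v σ = 0 := by
    funext a
    obtain ⟨R, hR⟩ := hfac (w a) (hw a)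
    have h1 := congrArg (· * R) (sum_sign_mul_prod_symp_eq_zero hcard fun p => w a (pt p))
    simp only [Finset.sum_mul, zero_mul, mul_assoc, hR] at h1
    rw [Finset.sum_apply, Pi.zero_apply]
    refine (mul_right_injective₀ hε0) ?_
    simp only [v, Finset.mul_sum, mul_zero]
    rw [← h1]
    exact Finset.sum_congr rfl fun σ _ => by ring
  have hdec : ∀ σ, ∃ c : ℕ, (σ = 1 → c = 1) ∧ v σ - (c : ℂ) • matchVec w M ∈ S := by
    intro σ
    by_cases hσ : h.extend σ * M * (h.extend σ)⁻¹ = M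
    · refine ⟨1, fun _ => rfl, ?_⟩
      have hcomm : ∀ i b, σ (i, !b) = ((σ (i, b)).1, !(σ (i, b)).2) := by
        intro i b
        apply h.injective
        have h1 : h.extend σ * M = M * h.extend σ := mul_inv_eq_iff_eq_mul.1 hσ
        have h2 := DFunLike.congr_fun h1 (pt (i, b))
        simp only [Equiv.Perm.mul_apply, h.apply_pt, h.extend_pt] at h2
        rw [h2, ← h.apply_pt]
      convert S.zero_mem
      rw [Nat.cast_one, one_smul, sub_eq_zero]
      funext a
      obtain ⟨R, hR⟩ := hfac (w a) (hw a)
      refine (mul_right_injective₀ hε0) ?_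
      simp only [v, matchVec]
      have h1 := hR 1
      simp only [h.extend_one, Equiv.Perm.one_apply] at h1
      rw [mul_left_comm, ← hR, ← h1, prod_symp_comp_of_comm σ hcomm fun p => w a (pt p),
        ← mul_assoc, ← mul_assoc, hsq, one_mul]
    · refine ⟨0, ?_, ?_⟩
      · rintro rfl
        refine absurd ?_ hσ
        have : h.extend 1 = 1 := Equiv.ext h.extend_one
        simp [this]
      · rw [Nat.cast_zero, zero_smul, sub_zero]
        obtain ⟨δ, -, hδ⟩ := matchProd_comp_perm hM (h.extend_rev σ) l
        have : v σ = (((Equiv.Perm.sign σ : ℤ) : ℂ) * δ) •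
            matchVec w (h.extend σ * M * (h.extend σ)⁻¹) := by
          funext a
          simp only [v, hδ (w a) (hw a), matchVec, Pi.smul_apply, smul_eq_mul, mul_assoc]
        rw [this]
        exact S.smul_mem _ (Submodule.subset_span
          ⟨_, hM.conj (h.extend_rev σ), h.toLex_conj_lt hM σ hσ, rfl⟩)
  choose c hc1 hc using hdec
  have hmem := S.sum_mem fun σ (_ : σ ∈ Finset.univ) => hc σ
  rw [Finset.sum_sub_distrib, hsum, zero_sub, ← Finset.sum_smul, S.neg_mem_iff] at hmem
  refine (S.smul_mem_iff ?_).1 hmem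
  rw [← Nat.cast_sum, Nat.cast_ne_zero, ← Nat.pos_iff_ne_zero]
  exact Finset.sum_pos' (fun _ _ => Nat.zero_le _) ⟨1, Finset.mem_univ _, by rw [hc1 1 rfl]; simp⟩

theorem exists_isNesting {N l : ℕ} {M : Equiv.Perm (Fin N)} (hM : IsSymMatching M)
    (hlis : ¬ lisLE (Fin.revPerm * M) (2 * l)) :
    ∃ (t : Finset (Fin N)) (pt : t × Bool → Fin N), IsNesting M pt ∧ l < t.card := by
  rw [lisLE_iff_card_le] at hlis
  push Not at hlis
  obtain ⟨s, hs, hcard⟩ := hlis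
  have key : ∃ t : Finset (Fin N), StrictAntiOn M t ∧ (∀ x ∈ t, x < M x) ∧ l < t.card := by
    have hsplit := Finset.card_filter_add_card_filter_not (s := s) fun x => x < M x
    by_cases h1 : l < (s.filter fun x => x < M x).card
    · exact ⟨_, hs.mono (Finset.coe_subset.2 (Finset.filter_subset _ _)),
        fun x hx => (Finset.mem_filter.1 hx).2, h1⟩
    · refine ⟨(s.filter fun x => ¬ x < M x).map M.toEmbedding, ?_, ?_, ?_⟩
      · intro x hx y hy hxy
        simp only [Finset.coe_map, Set.mem_image, Finset.mem_coe, Finset.mem_filter] at hx hy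
        obtain ⟨x, ⟨hx, -⟩, rfl⟩ := hx
        obtain ⟨y, ⟨hy, -⟩, rfl⟩ := hy
        simp only [Equiv.coe_toEmbedding, hM.invol] at hxy ⊢
        exact (hs.lt_iff_gt hx hy).1 hxy
      · intro x hx
        obtain ⟨x, hx', rfl⟩ := Finset.mem_map.1 hx
        simp only [Equiv.coe_toEmbedding, hM.invol]
        exact lt_of_le_of_ne (not_lt.1 (Finset.mem_filter.1 hx').2) (hM.ne_self x)
      · rw [Finset.card_map]
        omega
  obtain ⟨t, ht, hlt, hcard⟩ := key
  have hcross : ∀ x ∈ t, ∀ y ∈ t, x < M y := by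
    intro x hx y hy
    rcases lt_trichotomy x y with h | h | h
    · exact h.trans (hlt y hy)
    · rw [← h]; exact hlt x hx
    · exact (hlt x hx).trans (ht hy hx h)
  refine ⟨t, fun p => if p.2 then M p.1 else p.1, ⟨?_, ?_, ?_, ?_⟩, hcard⟩
  · rintro ⟨⟨x, hx⟩, b⟩ ⟨⟨y, hy⟩, c⟩ hxy
    cases b <;> cases c <;> simp at hxy ⊢
    · exact hxy
    · exact absurd hxy (hcross x hx y hy).ne
    · exact absurd hxy (hcross y hy x hx).ne'
    · exact hxy
  · rintro ⟨x, hx⟩ b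
    cases b <;> simp [hM.invol]
  · rintro ⟨⟨x, hx⟩, b⟩ ⟨⟨y, hy⟩, c⟩ hxy
    cases b <;> cases c <;> simp [hM.invol] at hxy ⊢
    · exact ht hx hy hxy
    · exact hcross y hy x hx
    · exact absurd hxy (hcross y hy x hx).not_gt
    · exact (ht.lt_iff_gt hx hy).1 hxy
  · have hff : ∀ x ∈ t, ∀ y ∈ t, x.rev ≠ y := by
      rintro x hx y hy rfl
      have h1 := hcross x hx x.rev hy
      have h2 := hcross _ hy x hx
      rw [hM.comm_rev] at h1
      rw [← Fin.rev_lt_rev, Fin.rev_rev] at h1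
      exact h1.not_gt h2
    have hft : ∀ x ∈ t, ∀ y ∈ t, x.rev ≠ M y := by
      intro x hx y hy hxy
      have hxy' : M x = y.rev := by
        rw [← Fin.rev_rev (M x), ← hM.comm_rev, hxy, hM.invol]
      rcases lt_trichotomy x y with h | h | h
      · have h1 := ht hx hy h
        rw [← hxy, hxy', Fin.rev_lt_rev] at h1
        exact h1.not_gt h
      · exact hM.ne_rev y (by rw [← hxy, h])
      · have h1 := ht hy hx h
        rw [← hxy, hxy', Fin.rev_lt_rev] at h1
        exact h1.not_gt h
    rintro ⟨⟨x, hx⟩, b⟩ ⟨⟨y, hy⟩, c⟩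
    cases b <;> cases c <;> simp only [if_true, Bool.false_eq_true, if_false]
    · exact hff x hx y hy
    · exact hft x hx y hy
    · exact fun h => hft y hy x hx (by rw [← h, Fin.rev_rev])
    · exact fun h => hff x hx y hy (M.injective (by rw [hM.comm_rev, h]))

/-- Every matching is a combination of matchings with bounded nestings. -/
theorem matchVec_mem_span {N l : ℕ} {A : Type*} {w : A → Fin N → Fin l ⊕ Fin l → ℂ}
    (hw : ∀ a, IsMirrored (w a)) {M : Equiv.Perm (Fin N)} (hM : IsSymMatching M) :
    matchVec w M ∈ Submodule.span ℂ (Set.range fun M' : {M' : Equiv.Perm (Fin N) //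
      IsSymMatching M' ∧ lisLE (Fin.revPerm * M') (2 * l)} => matchVec w M') := by
  generalize hx : toLex (M : Fin N → Fin N) = x
  induction x using WellFoundedLT.induction generalizing M with
  | ind x ih =>
    by_cases hlis : lisLE (Fin.revPerm * M) (2 * l)
    · exact Submodule.subset_span ⟨⟨M, hM, hlis⟩, rfl⟩
    · obtain ⟨t, pt, h, hcard⟩ := exists_isNesting hM hlis
      refine Submodule.span_le.2 ?_
        (matchVec_mem_span_of_isNesting hw hM h (by rwa [Fintype.card_coe]))
      rintro _ ⟨M', hM', hlt, rfl⟩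
      exact ih _ (hx ▸ hlt) hM' rfl

/-- The extension of a family of vectors on the lower half of `Fin N` to a mirrored family. -/
def mirror {N l : ℕ} (t : {x : Fin N // x < x.rev} → Fin l ⊕ Fin l → ℂ) :
    Fin N → Fin l ⊕ Fin l → ℂ :=
  fun x => if h : x < x.rev then t ⟨x, h⟩
    else if h : x.rev < x then signFlip l (t ⟨x.rev, by rwa [Fin.rev_rev]⟩) else 0

theorem mirror_of_lt {N l : ℕ} (t : {x : Fin N // x < x.rev} → Fin l ⊕ Fin l → ℂ) {x : Fin N}
    (h : x < x.rev) : mirror t x = t ⟨x, h⟩ := dif_pos h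

theorem mirror_of_gt {N l : ℕ} (t : {x : Fin N // x < x.rev} → Fin l ⊕ Fin l → ℂ) {x : Fin N}
    (h : x.rev < x) : mirror t x = signFlip l (t ⟨x.rev, by rwa [Fin.rev_rev]⟩) := by
  rw [mirror, dif_neg h.not_gt, dif_pos h]

theorem mirror_isMirrored {N l : ℕ} (t : {x : Fin N // x < x.rev} → Fin l ⊕ Fin l → ℂ) :
    IsMirrored (mirror t) := by
  intro x
  rcases lt_trichotomy x x.rev with h | h | h
  · rw [mirror_of_lt t h, mirror_of_gt t (by rwa [Fin.rev_rev])]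
    simp only [Fin.rev_rev]
  · rw [← h, mirror, dif_neg (by rw [← h]; exact lt_irrefl _),
      dif_neg (by rw [← h]; exact lt_irrefl _), map_zero]
  · rw [mirror_of_gt t h, mirror_of_lt t (by rwa [Fin.rev_rev]), signFlip_signFlip]

theorem IsSymMatching.ne_rev_self {N : ℕ} {M : Equiv.Perm (Fin N)} (hM : IsSymMatching M)
    (x : Fin N) : x.rev ≠ x := by
  intro h
  have h1 : (M x).rev = M x := by rw [← hM.comm_rev, h]
  refine hM.ne_self x (Fin.ext ?_)
  have h2 := congrArg Fin.val h
  have h3 := congrArg Fin.val h1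
  simp only [Fin.val_rev] at h2 h3
  have := x.isLt
  have := (M x).isLt
  omega

theorem mirror_restrict {N l : ℕ} (hN : ∀ x : Fin N, x.rev ≠ x) {w : Fin N → Fin l ⊕ Fin l → ℂ}
    (hw : IsMirrored w) : mirror (fun x => w x.1) = w := by
  funext x
  rcases lt_or_gt_of_ne (hN x) with h | h
  · rw [mirror_of_gt _ h, hw x, signFlip_signFlip]
  · rw [mirror_of_lt _ h]

/-- The representative of `x` or `x.rev` in the lower half. -/
def lowerHalf {N : ℕ} (hN : ∀ x : Fin N, x.rev ≠ x) (x : Fin N) : {x : Fin N // x < x.rev} :=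
  if h : x < x.rev then ⟨x, h⟩ else ⟨x.rev, by
    rw [Fin.rev_rev]; exact lt_of_le_of_ne (not_lt.1 h) (hN x)⟩

theorem lowerHalf_eq {N : ℕ} (hN : ∀ x : Fin N, x.rev ≠ x) (x : Fin N) :
    (lowerHalf hN x).1 = x ∨ (lowerHalf hN x).1 = x.rev := by
  unfold lowerHalf
  split_ifs <;> simp

theorem mirror_eq_lowerHalf {N l : ℕ} (hN : ∀ x : Fin N, x.rev ≠ x)
    (t : {x : Fin N // x < x.rev} → Fin l ⊕ Fin l → ℂ) (x : Fin N) :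
    mirror t x = (if x < x.rev then LinearMap.id else signFlip l) (t (lowerHalf hN x)) := by
  unfold lowerHalf
  by_cases h : x < x.rev
  · simp only [h, dif_pos, if_true, mirror_of_lt t h, LinearMap.id_apply]
  · rw [mirror_of_gt t (lt_of_le_of_ne (not_lt.1 h) (hN x))]
    simp only [h, if_false, dif_neg, not_false_eq_true]

/-- `matchProd` is a multilinear function of the vectors on the lower half. -/
theorem exists_multilinearMap_matchProd {N : ℕ} {M : Equiv.Perm (Fin N)} (hM : IsSymMatching M)
    (l : ℕ) : ∃ F : MultilinearMap ℂ
      (fun _ : {x : Fin N // x < x.rev} => Fin l ⊕ Fin l → ℂ) ℂ,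
      ∀ t, F t = matchProd M (mirror t) := by
  have hN := hM.ne_rev_self
  let e : {x // orbMin M x = x} × Bool → {x : Fin N // x < x.rev} :=
    fun p => lowerHalf hN (if p.2 then M p.1 else p.1)
  have heq : ∀ z z', lowerHalf hN z = lowerHalf hN z' → z = z' ∨ z = z'.rev := by
    intro z z' h
    have h' := congrArg Subtype.val h
    rcases lowerHalf_eq hN z with h1 | h1 <;> rcases lowerHalf_eq hN z' with h2 | h2 <;>
      rw [h1, h2] at h'
    · exact Or.inl h'
    · exact Or.inr h'
    · exact Or.inr (by rw [← h', Fin.rev_rev])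
    · exact Or.inl (Fin.rev_injective h')
  have hlow : ∀ z (hz : z < z.rev), lowerHalf hN z = ⟨z, hz⟩ := fun z hz => dif_pos hz
  have hlow' : ∀ z, lowerHalf hN z.rev = lowerHalf hN z := by
    intro z
    unfold lowerHalf
    by_cases h : z < z.rev
    · simp [h, h.not_gt]
    · have h' := lt_of_le_of_ne (not_lt.1 h) (hN z)
      simp [h, h']
  have he : Function.Bijective e := by
    constructor
    · have horb : ∀ (x : {x // orbMin M x = x}) (b : Bool),
          orbMin M (if b then M x.1 else x.1) = x.1 := by
        rintro ⟨x, hx⟩ b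
        cases b
        · exact hx
        · exact (orbMin_apply hM x).trans hx
      rintro ⟨x, b⟩ ⟨y, c⟩ hxy
      have h1 := heq _ _ hxy
      have h2 : x = y := by
        apply Subtype.ext
        rw [← horb x b, ← horb y c]
        rcases h1 with h1 | h1
        · simp only at h1
          rw [h1]
        · simp only at h1
          rw [h1, orbMin_rev hM]
      subst h2
      cases b <;> cases c <;> simp only [if_true, Bool.false_eq_true, if_false] at h1 ⊢
      · rcases h1 with h1 | h1
        · exact absurd h1.symm (hM.ne_self _)
        · exact absurd (by rw [← hM.comm_rev] at h1; rw [h1, hM.invol, ← h1]) (hM.ne_rev x.1)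
      · rcases h1 with h1 | h1
        · exact absurd h1 (hM.ne_self _)
        · exact absurd h1 (hM.ne_rev _)
    · rintro ⟨z, hz⟩
      have h1 := orbMin_orbMin hM z
      rcases orbMin_mem M z with h | h | h | h
      · exact ⟨(⟨z, h⟩, false), hlow z hz⟩
      · refine ⟨(⟨orbMin M z, h1⟩, true), ?_⟩
        simp only [e, if_true, h, hM.invol, hlow z hz]
      · refine ⟨(⟨orbMin M z, h1⟩, false), ?_⟩
        simp only [e, Bool.false_eq_true, if_false, h, hlow', hlow z hz]
      · refine ⟨(⟨orbMin M z, h1⟩, true), ?_⟩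
        simp only [e, if_true, h, hM.comm_rev, hM.invol, hlow', hlow z hz]
  let J : Fin N → (Fin l ⊕ Fin l → ℂ) →ₗ[ℂ] (Fin l ⊕ Fin l → ℂ) :=
    fun x => if x < x.rev then LinearMap.id else signFlip l
  refine ⟨(pairProd fun x : {x // orbMin M x = x} =>
    (symp l).compl₁₂ (J x) (J (M x))).domDomCongr (Equiv.ofBijective e he), fun t => ?_⟩
  rw [MultilinearMap.domDomCongr_apply, pairProd_apply, matchProd,
    Finset.prod_subtype (Finset.univ.filter fun x => orbMin M x = x) (p := fun x => orbMin M x = x)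
      (by simp)]
  refine Finset.prod_congr rfl fun x _ => ?_
  rw [mirror_eq_lowerHalf hN, mirror_eq_lowerHalf hN]
  rfl

/-- Expansion of `matchProd` in the standard basis. -/
theorem sum_mul_matchProd_single {N : ℕ} {M : Equiv.Perm (Fin N)} (hM : IsSymMatching M) {l : ℕ}
    (t : {x : Fin N // x < x.rev} → Fin l ⊕ Fin l → ℂ) :
    ∑ a : {x : Fin N // x < x.rev} → Fin l ⊕ Fin l, (∏ k, t k (a k)) *
      matchProd M (mirror fun k => Pi.single (a k) 1) = matchProd M (mirror t) := by
  obtain ⟨F, hF⟩ := exists_multilinearMap_matchProd hM l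
  have ht : t = fun k => ∑ j, t k j • (Pi.single j 1 : Fin l ⊕ Fin l → ℂ) := by
    funext k
    exact (pi_eq_sum_univ' (t k)).trans (Finset.sum_congr rfl fun j _ => by
      congr 1)
  rw [← hF t]
  conv_rhs => rw [ht]
  rw [MultilinearMap.map_sum]
  refine Finset.sum_congr rfl fun a _ => ?_
  rw [← hF, MultilinearMap.map_smul_univ, smul_eq_mul]

/-- The tensor of a matching. -/
def matchTensor {N : ℕ} (l : ℕ) (M : Equiv.Perm (Fin N)) :
    ({x : Fin N // x < x.rev} → Fin l ⊕ Fin l) → ℂ :=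
  matchVec (fun a => mirror fun k => Pi.single (a k) 1) M

theorem linearIndependent_matchTensor (N l : ℕ) :
    LinearIndependent ℂ fun M : {M : Equiv.Perm (Fin N) //
      IsSymMatching M ∧ lisLE (Fin.revPerm * M) (2 * l)} => matchTensor l M.1 := by
  classical
  rw [Fintype.linearIndependent_iff]
  intro g hg
  by_contra! hne
  obtain ⟨M₁, hM₁⟩ := hne
  obtain ⟨M₀, hM₀, hmax⟩ := Finset.exists_max_image (Finset.univ.filter fun M => g M ≠ 0)
    (fun M => toLex (M.1 : Fin N → Fin N)) ⟨M₁, by simpa using hM₁⟩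
  have hgM₀ : g M₀ ≠ 0 := by simpa using hM₀
  have hN := M₀.2.1.ne_rev_self
  have hmir := testVec_isMirrored M₀.2.1 l
  have key : ∑ M, g M * matchProd M.1 (testVec l M₀.1) = 0 := by
    have h1 : ∀ M : {M : Equiv.Perm (Fin N) //
        IsSymMatching M ∧ lisLE (Fin.revPerm * M) (2 * l)},
        matchProd M.1 (testVec l M₀.1) = ∑ a : {x : Fin N // x < x.rev} → Fin l ⊕ Fin l,
          (∏ k, testVec l M₀.1 k.1 (a k)) * matchTensor l M.1 a := fun M => by
      rw [← mirror_restrict hN hmir, ← sum_mul_matchProd_single M.2.1]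
      rw [mirror_restrict hN hmir]
      rfl
    simp only [h1, Finset.mul_sum]
    rw [Finset.sum_comm]
    refine Finset.sum_eq_zero fun a _ => ?_
    have h2 := congrFun hg a
    simp only [Finset.sum_apply, Pi.smul_apply, smul_eq_mul, Pi.zero_apply] at h2
    simp only [mul_left_comm (g _), ← Finset.mul_sum, h2, mul_zero]
  rw [Finset.sum_eq_single M₀] at key
  · exact mul_ne_zero hgM₀ (matchProd_testVec_ne_zero M₀.2.1 M₀.2.2) key
  · intro M _ hMne
    by_contra h3
    have h4 := toLex_le_of_matchProd_testVec_ne_zero M₀.2.1 M.2.1 (right_ne_zero_of_mul h3)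
    have h5 := hmax M (by simpa using left_ne_zero_of_mul h3)
    exact hMne (Subtype.ext (DFunLike.coe_injective (toLex_inj.1 (le_antisymm h5 h4))))
  · simp

/-- The action of a matrix on tensors, in coordinates. -/
def tensorPow {m : Type*} (α : Type*) [Fintype α] (X : Matrix m m ℂ) :
    Matrix (α → m) (α → m) ℂ :=
  Matrix.of fun a b => ∏ k, X (a k) (b k)

theorem tensorPow_apply {m α : Type*} [Fintype α] (X : Matrix m m ℂ) (a b : α → m) :
    tensorPow α X a b = ∏ k, X (a k) (b k) := rfl

theorem tensorPow_mul {m α : Type*} [Fintype α] [Fintype m] [DecidableEq α] (X Y : Matrix m m ℂ) :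
    tensorPow α (X * Y) = tensorPow α X * tensorPow α Y := by
  ext a b
  simp only [tensorPow_apply, Matrix.mul_apply, Fintype.prod_sum, Finset.prod_mul_distrib]

/-- The direct sum of a matrix and its complex conjugate. -/
def dbl {l : ℕ} (U : Matrix (Fin l) (Fin l) ℂ) : Matrix (Fin l ⊕ Fin l) (Fin l ⊕ Fin l) ℂ :=
  Matrix.fromBlocks U 0 0 (U.map (starRingEnd ℂ))

theorem dbl_mul {l : ℕ} (U V : Matrix (Fin l) (Fin l) ℂ) : dbl (U * V) = dbl U * dbl V := by
  simp [dbl, Matrix.fromBlocks_multiply, Matrix.map_mul]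

theorem vecMul_dbl {l : ℕ} (U : Matrix (Fin l) (Fin l) ℂ) (u : Fin l ⊕ Fin l → ℂ) :
    u ᵥ* dbl U = Sum.elim ((u ∘ Sum.inl) ᵥ* U) ((u ∘ Sum.inr) ᵥ* U.map (starRingEnd ℂ)) := by
  rw [dbl, Matrix.vecMul_fromBlocks]
  simp

theorem symp_eq_dotProduct {l : ℕ} (u v : Fin l ⊕ Fin l → ℂ) :
    symp l u v = (u ∘ Sum.inl) ⬝ᵥ (v ∘ Sum.inr) - (u ∘ Sum.inr) ⬝ᵥ (v ∘ Sum.inl) := by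
  rw [symp_apply, Finset.sum_sub_distrib]
  rfl

theorem symp_vecMul_dbl {l : ℕ} {U : Matrix (Fin l) (Fin l) ℂ}
    (hU : U ∈ Matrix.unitaryGroup (Fin l) ℂ) (u v : Fin l ⊕ Fin l → ℂ) :
    symp l (u ᵥ* dbl U) (v ᵥ* dbl U) = symp l u v := by
  have h1 : U * (U.map (starRingEnd ℂ))ᵀ = 1 := Matrix.mem_unitaryGroup_iff.1 hU
  have h2 : U.map (starRingEnd ℂ) * Uᵀ = 1 := by
    have := congrArg Matrix.transpose h1
    rwa [Matrix.transpose_mul, Matrix.transpose_transpose, Matrix.transpose_one] at this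
  have key : ∀ (X Y : Matrix (Fin l) (Fin l) ℂ), X * Yᵀ = 1 → ∀ a b : Fin l → ℂ,
      (a ᵥ* X) ⬝ᵥ (b ᵥ* Y) = a ⬝ᵥ b := by
    intro X Y h a b
    rw [← Matrix.dotProduct_mulVec, ← Matrix.mulVec_transpose, Matrix.mulVec_mulVec, h,
      Matrix.one_mulVec]
  rw [symp_eq_dotProduct, symp_eq_dotProduct, vecMul_dbl, vecMul_dbl]
  simp only [Sum.elim_comp_inl, Sum.elim_comp_inr, key _ _ h1, key _ _ h2]

theorem signFlip_vecMul_dbl {l : ℕ} (U : Matrix (Fin l) (Fin l) ℂ) (u : Fin l ⊕ Fin l → ℂ) :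
    signFlip l u ᵥ* dbl U = signFlip l (u ᵥ* dbl U) := by
  rw [vecMul_dbl, vecMul_dbl]
  funext i
  rcases i with i | i
  · rfl
  · rw [signFlip_inr, Sum.elim_inr, Sum.elim_inr, ← Pi.neg_apply, ← Matrix.neg_vecMul]
    rfl

/-- The tensors of matchings are invariant. -/
theorem tensorPow_dbl_mulVec_matchTensor {N l : ℕ} {M : Equiv.Perm (Fin N)} (hM : IsSymMatching M)
    {U : Matrix (Fin l) (Fin l) ℂ} (hU : U ∈ Matrix.unitaryGroup (Fin l) ℂ) :
    tensorPow {x : Fin N // x < x.rev} (dbl U) *ᵥ matchTensor l M = matchTensor l M := by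
  funext a
  have hN := hM.ne_rev_self
  have h1 := sum_mul_matchProd_single hM fun k => dbl U (a k)
  refine h1.trans ?_
  have h2 : ∀ x, mirror (fun k => dbl U (a k)) x =
      mirror (fun k => Pi.single (a k) 1) x ᵥ* dbl U := by
    intro x
    rcases lt_or_gt_of_ne (hN x) with h | h
    · rw [mirror_of_gt _ h, mirror_of_gt _ h, signFlip_vecMul_dbl, Matrix.single_one_vecMul]
      rfl
    · rw [mirror_of_lt _ h, mirror_of_lt _ h, Matrix.single_one_vecMul]
      rfl
  simp only [matchTensor, matchVec, matchProd, h2, symp_vecMul_dbl hU]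

theorem infinite_unit_circle : {z : ℂ | z * star z = 1}.Infinite := by
  have : Infinite (Set.Ioc (-Real.pi) Real.pi) :=
    Set.infinite_coe_iff.2 (Set.Ioc_infinite (by linarith [Real.pi_pos]))
  have : Infinite Circle := Circle.argEquiv.infinite_iff.2 this
  refine (Set.infinite_range_of_injective (f := fun z : Circle => (z : ℂ))
    Subtype.val_injective).mono ?_
  rintro _ ⟨z, rfl⟩
  simp [Complex.mul_conj, Circle.normSq_coe]

/-- A polynomial in the entries of a matrix that vanishes on unitary matrices vanishes on Hermitian
matrices. -/
theorem eval_eq_zero_of_isHermitian {m : Type*} [Fintype m] [DecidableEq m]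
    (p : MvPolynomial (m × m) ℂ)
    (hp : ∀ U ∈ Matrix.unitaryGroup m ℂ, MvPolynomial.eval (fun ij => U ij.1 ij.2) p = 0)
    {X : Matrix m m ℂ} (hX : X.IsHermitian) : MvPolynomial.eval (fun ij => X ij.1 ij.2) p = 0 := by
  set V : Matrix m m ℂ := hX.eigenvectorUnitary.1 with hV
  have hVmem : V ∈ Matrix.unitaryGroup m ℂ := hX.eigenvectorUnitary.2
  let q : MvPolynomial m ℂ := MvPolynomial.bind₁ (fun ij : m × m =>
    ∑ k, MvPolynomial.C (V ij.1 k * star V k ij.2) * MvPolynomial.X k) p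
  have hq : ∀ d : m → ℂ, MvPolynomial.eval d q =
      MvPolynomial.eval (fun ij => (V * Matrix.diagonal d * star V) ij.1 ij.2) p := by
    intro d
    have h1 := MvPolynomial.eval₂Hom_bind₁ (RingHom.id ℂ) d (fun ij : m × m =>
      ∑ k, MvPolynomial.C (V ij.1 k * star V k ij.2) * MvPolynomial.X k) p
    refine h1.trans ?_
    change MvPolynomial.eval _ p = _
    congr 2
    funext ij
    change MvPolynomial.eval d _ = _
    rw [map_sum, Matrix.mul_apply]
    refine Finset.sum_congr rfl fun k _ => ?_
    rw [map_mul, MvPolynomial.eval_C, MvPolynomial.eval_X, Matrix.mul_diagonal]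
    ring
  have hq0 : q = 0 := by
    refine MvPolynomial.funext_set (fun _ => {z : ℂ | z * star z = 1})
      (fun _ => infinite_unit_circle) fun d hd => ?_
    rw [hq, map_zero]
    refine hp _ (mul_mem (mul_mem hVmem ?_) (Unitary.star_mem hVmem))
    rw [Matrix.mem_unitaryGroup_iff, Matrix.star_eq_conjTranspose, Matrix.diagonal_conjTranspose,
      Matrix.diagonal_mul_diagonal, ← Matrix.diagonal_one]
    congr 1
    funext i
    exact hd i (Set.mem_univ i)
  have h := hX.spectral_theorem
  rw [Unitary.conjStarAlgAut_apply] at h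
  have h2 := hq (RCLike.ofReal ∘ hX.eigenvalues)
  rw [hq0, map_zero] at h2
  rw [h2]
  congr 2
  funext ij
  conv_lhs => rw [h]

/-- Unitary matrices are Zariski dense. -/
theorem eval_eq_zero_of_unitary {m : Type*} [Fintype m] [DecidableEq m]
    (p : MvPolynomial (m × m) ℂ)
    (hp : ∀ U ∈ Matrix.unitaryGroup m ℂ, MvPolynomial.eval (fun ij => U ij.1 ij.2) p = 0)
    (X : Matrix m m ℂ) : MvPolynomial.eval (fun ij => X ij.1 ij.2) p = 0 := by
  set H : Matrix m m ℂ := (realPart X).1 with hH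
  set K : Matrix m m ℂ := (imaginaryPart X).1 with hK
  have hHs : H.IsHermitian := (realPart X).2
  have hKs : K.IsHermitian := (imaginaryPart X).2
  let q : MvPolynomial Unit ℂ := MvPolynomial.bind₁ (fun ij : m × m =>
    MvPolynomial.C (H ij.1 ij.2) + MvPolynomial.X () * MvPolynomial.C (K ij.1 ij.2)) p
  have hq : ∀ d : Unit → ℂ, MvPolynomial.eval d q =
      MvPolynomial.eval (fun ij => (H + d () • K) ij.1 ij.2) p := by
    intro d
    have h1 := MvPolynomial.eval₂Hom_bind₁ (RingHom.id ℂ) d (fun ij : m × m =>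
      MvPolynomial.C (H ij.1 ij.2) + MvPolynomial.X () * MvPolynomial.C (K ij.1 ij.2)) p
    refine h1.trans ?_
    change MvPolynomial.eval _ p = _
    congr 2
    funext ij
    change MvPolynomial.eval d _ = _
    simp
  have hq0 : q = 0 := by
    refine MvPolynomial.funext_set (fun _ => Set.range fun t : ℝ => (t : ℂ))
      (fun _ => Set.infinite_range_of_injective Complex.ofReal_injective) fun d hd => ?_
    rw [hq, map_zero]
    obtain ⟨t, ht⟩ := hd () (Set.mem_univ _)
    rw [← ht]
    refine eval_eq_zero_of_isHermitian p hp (hHs.add ?_)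
    change (_ • K)ᴴ = _
    simp only [Matrix.conjTranspose_smul, hKs.eq]
    simp
  have h := hq fun _ => Complex.I
  rw [hq0, map_zero, hH, hK, realPart_add_I_smul_imaginaryPart] at h
  exact h.symm

/-- Polarization: the permanent as an alternating sum of products of row sums. -/
theorem sum_neg_one_pow_mul_prod_sum {α : Type*} [Fintype α] [DecidableEq α] (g : α → α → ℂ) :
    ∑ S : Finset α, (-1 : ℂ) ^ Sᶜ.card * ∏ k, ∑ q ∈ S, g k q =
      ∑ σ : Equiv.Perm α, ∏ k, g k (σ k) := by
  have h1 : ∀ S : Finset α, ∏ k, ∑ q ∈ S, g k q =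
      ∑ f : α → α, if ∀ k, f k ∈ S then ∏ k, g k (f k) else 0 := by
    intro S
    have : ∀ k, ∑ q ∈ S, g k q = ∑ q, if q ∈ S then g k q else 0 := fun k => by simp
    simp only [this, Fintype.prod_sum, Finset.prod_ite_zero, Finset.mem_univ, forall_const]
  have h2 : ∀ f : α → α, ∑ S : Finset α, (-1 : ℂ) ^ Sᶜ.card * (if ∀ k, f k ∈ S then
      ∏ k, g k (f k) else 0) = if Function.Surjective f then ∏ k, g k (f k) else 0 := by
    intro f
    have h3 := congrArg (Int.cast (R := ℂ))
      (Finset.sum_powerset_neg_one_pow_card (x := (Finset.univ.image f)ᶜ))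
    push_cast at h3
    have h4 : (Finset.univ.image f)ᶜ = ∅ ↔ Function.Surjective f := by
      rw [Finset.compl_eq_empty_iff, Finset.eq_univ_iff_forall]
      simp [Function.Surjective]
    simp only [h4] at h3
    rw [← mul_one (∏ k, g k (f k)), ← mul_zero (∏ k, g k (f k)), ← mul_ite, ← h3, Finset.mul_sum,
      ← Finset.sum_subset (Finset.subset_univ ((Finset.univ.image f)ᶜ.powerset.image Compl.compl))]
    · rw [Finset.sum_image fun _ _ _ _ h => compl_injective h]
      refine Finset.sum_congr rfl fun S hS => ?_
      rw [if_pos, compl_compl]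
      · ring
      · intro k
        rw [Finset.mem_compl]
        intro hk
        have := Finset.mem_powerset.1 hS hk
        simp at this
    · intro S _ hS
      rw [if_neg]
      · simp
      · intro hk
        refine hS (Finset.mem_image.2 ⟨Sᶜ, ?_, compl_compl S⟩)
        rw [Finset.mem_powerset, Finset.compl_subset_compl]
        intro x hx
        obtain ⟨k, -, rfl⟩ := Finset.mem_image.1 hx
        exact hk k
  simp only [h1, Finset.mul_sum]
  rw [Finset.sum_comm]
  simp only [h2]
  symm
  refine Fintype.sum_of_injective (fun σ : Equiv.Perm α => (σ : α → α)) DFunLike.coe_injective _ _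
    ?_ ?_
  · intro f hf
    rw [if_neg]
    intro hs
    exact hf ⟨Equiv.ofBijective f (Finite.surjective_iff_bijective.1 hs), rfl⟩
  · intro σ
    rw [if_pos σ.surjective]

/-- Place permutations of tensors, as matrices. -/
def placePerm {A B : Type*} [Fintype A] [Fintype B] (m : Type*) [DecidableEq m] (σ : B ≃ A) :
    Matrix (A → m) (B → m) ℂ :=
  Matrix.of fun i j => if i ∘ σ = j then 1 else 0

theorem placePerm_apply {A B m : Type*} [Fintype A] [Fintype B] [DecidableEq m] (σ : B ≃ A)
    (i : A → m) (j : B → m) : placePerm m σ i j = if i ∘ σ = j then 1 else 0 := rfl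

section Commutant

variable {α m : Type*} [Fintype α] [DecidableEq α] [DecidableEq m]

/-- The symmetrized tensor product of elementary matrices. -/
def symSingle (i j : α → m) : Matrix (α → m) (α → m) ℂ :=
  ∑ f : Equiv.Perm α, Matrix.single (i ∘ f) (j ∘ f) 1

theorem symSingle_eq_sum_tensorPow (i j : α → m) :
    symSingle i j = ∑ S : Finset α, (-1 : ℂ) ^ Sᶜ.card •
      tensorPow α (∑ q ∈ S, Matrix.single (i q) (j q) 1) := by
  ext a b
  simp only [symSingle, Matrix.sum_apply, Matrix.smul_apply, tensorPow_apply, smul_eq_mul]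
  rw [sum_neg_one_pow_mul_prod_sum fun k q => Matrix.single (i q) (j q) (1 : ℂ) (a k) (b k)]
  refine Finset.sum_congr rfl fun f _ => ?_
  simp only [Matrix.single_apply, Finset.prod_ite_zero, Finset.prod_const_one]
  refine if_congr ?_ rfl rfl
  simp only [funext_iff, Function.comp_apply, Finset.mem_univ, forall_const, forall_and]

variable [Fintype m]

theorem commute_symSingle {T : Matrix (α → m) (α → m) ℂ}
    (hT : ∀ X : Matrix m m ℂ, tensorPow α X * T = T * tensorPow α X) (i j : α → m) :
    symSingle i j * T = T * symSingle i j := by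
  rw [symSingle_eq_sum_tensorPow, Finset.sum_mul, Finset.mul_sum]
  refine Finset.sum_congr rfl fun S _ => ?_
  rw [Matrix.smul_mul, Matrix.mul_smul, hT]

theorem sum_single_comp (f g : Equiv.Perm α) :
    ∑ i : α → m, Matrix.single (i ∘ f) (i ∘ g) (1 : ℂ) = placePerm m (f⁻¹ * g) := by
  ext a b
  rw [Matrix.sum_apply, Finset.sum_eq_single (a ∘ f.symm)]
  · simp only [Matrix.single_apply, placePerm_apply]
    refine if_congr ?_ rfl rfl
    have h1 : (a ∘ f.symm) ∘ f = a := by funext x; simp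
    rw [h1]
    simp only [true_and]
    rfl
  · intro i _ hi
    rw [Matrix.single_apply, if_neg]
    rintro ⟨rfl, -⟩
    exact hi (by funext x; simp)
  · simp

theorem sum_symSingle_self :
    ∑ i : α → m, symSingle i i = (Fintype.card (Equiv.Perm α) : ℂ) • 1 := by
  have h1 : placePerm m (1 : Equiv.Perm α) = 1 := by
    ext a b
    rw [placePerm_apply, Matrix.one_apply]
    rfl
  simp only [symSingle]
  rw [Finset.sum_comm]
  simp only [sum_single_comp, inv_mul_cancel, h1]
  rw [Finset.sum_const, Finset.card_univ, Nat.cast_smul_eq_nsmul]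

theorem sum_symSingle_mul_mul_mem (Y : Matrix (α → m) (α → m) ℂ) :
    ∑ i : α → m, ∑ j : α → m, symSingle i j * Y * (symSingle i j)ᴴ ∈
      Submodule.span ℂ (Set.range fun σ : Equiv.Perm α => placePerm m σ) := by
  have h1 : ∀ i j : α → m, symSingle i j * Y * (symSingle i j)ᴴ =
      ∑ f : Equiv.Perm α, ∑ g : Equiv.Perm α,
        Y (j ∘ f) (j ∘ g) • Matrix.single (i ∘ f) (i ∘ g) (1 : ℂ) := by
    intro i j
    simp only [symSingle, Matrix.conjTranspose_sum, Matrix.conjTranspose_single, Finset.sum_mul,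
      Finset.mul_sum, Matrix.single_mul_mul_single, star_one, one_mul, mul_one]
    rw [Finset.sum_comm]
    simp
  have h2 : ∑ i : α → m, ∑ j : α → m, symSingle i j * Y * (symSingle i j)ᴴ =
      ∑ f : Equiv.Perm α, ∑ g : Equiv.Perm α, (∑ j : α → m, Y (j ∘ f) (j ∘ g)) •
        placePerm m (f⁻¹ * g) := by
    simp only [h1, ← sum_single_comp]
    calc _ = ∑ i : α → m, ∑ f : Equiv.Perm α, ∑ g : Equiv.Perm α,
          (∑ j : α → m, Y (j ∘ f) (j ∘ g)) • Matrix.single (i ∘ f) (i ∘ g) (1 : ℂ) := by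
            refine Finset.sum_congr rfl fun i _ => ?_
            rw [Finset.sum_comm]
            refine Finset.sum_congr rfl fun f _ => ?_
            rw [Finset.sum_comm]
            exact Finset.sum_congr rfl fun g _ => (Finset.sum_smul).symm
      _ = _ := by
            rw [Finset.sum_comm]
            refine Finset.sum_congr rfl fun f _ => ?_
            rw [Finset.sum_comm]
            exact Finset.sum_congr rfl fun g _ => (Finset.smul_sum).symm
  rw [h2]
  exact Submodule.sum_mem _ fun f _ => Submodule.sum_mem _ fun g _ =>
    Submodule.smul_mem _ _ (Submodule.subset_span ⟨_, rfl⟩)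

open scoped ComplexOrder in
theorem eq_zero_of_mul_sum_symSingle {T : Matrix (α → m) (α → m) ℂ}
    (hT : T * ∑ i : α → m, ∑ j : α → m, symSingle i j * (symSingle i j)ᴴ = 0) : T = 0 := by
  have h1 : ∑ i : α → m, ∑ j : α → m,
      ((T * symSingle i j) * (T * symSingle i j)ᴴ).trace = 0 := by
    simp only [← Matrix.trace_sum]
    have h := congrArg (· * Tᴴ) hT
    simp only [zero_mul] at h
    rw [← Matrix.trace_zero (n := α → m) (R := ℂ), ← h]
    simp only [Finset.mul_sum, Finset.sum_mul, Matrix.conjTranspose_mul, Matrix.mul_assoc]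
  have hnn : ∀ i j : α → m, 0 ≤ ((T * symSingle i j) * (T * symSingle i j)ᴴ).trace := fun i j =>
    (Matrix.posSemidef_self_mul_conjTranspose _).trace_nonneg
  have h2 : ∀ i j : α → m, T * symSingle i j = 0 := by
    intro i j
    have h3 := (Finset.sum_eq_zero_iff_of_nonneg fun i _ =>
      Finset.sum_nonneg fun j _ => hnn i j).1 h1 i (Finset.mem_univ _)
    have h4 := (Finset.sum_eq_zero_iff_of_nonneg fun j _ => hnn i j).1 h3 j (Finset.mem_univ _)
    exact Matrix.trace_mul_conjTranspose_self_eq_zero_iff.1 h4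
  have h5 := congrArg (T * ·) (sum_symSingle_self (α := α) (m := m))
  simp only [Finset.mul_sum, h2, Finset.sum_const_zero, Matrix.mul_smul, mul_one] at h5
  exact (smul_eq_zero.1 h5.symm).resolve_left (Nat.cast_ne_zero.2 Fintype.card_ne_zero)

/-- Schur–Weyl duality: the commutant of the tensor powers of matrices is spanned by
permutations. -/
theorem mem_span_placePerm_of_commute {T : Matrix (α → m) (α → m) ℂ}
    (hT : ∀ X : Matrix m m ℂ, tensorPow α X * T = T * tensorPow α X) :
    T ∈ Submodule.span ℂ (Set.range fun σ : Equiv.Perm α => placePerm m σ) := by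
  set 𝒜 := Submodule.span ℂ (Set.range fun σ : Equiv.Perm α => placePerm m σ) with h𝒜
  let 𝒞 : Submodule ℂ (Matrix (α → m) (α → m) ℂ) :=
    { carrier := {T | ∀ X : Matrix m m ℂ, tensorPow α X * T = T * tensorPow α X}
      add_mem' := fun hS hT X => by rw [mul_add, add_mul, hS, hT]
      zero_mem' := fun X => by simp
      smul_mem' := fun c T hT X => by rw [Matrix.mul_smul, Matrix.smul_mul, hT] }
  have hle : 𝒜 ≤ 𝒞 := by
    rw [h𝒜, Submodule.span_le]
    rintro _ ⟨σ, rfl⟩ X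
    ext a b
    simp only [Matrix.mul_apply, placePerm_apply, tensorPow_apply]
    have h1 : ∀ c : α → m, c ∘ σ = b ↔ c = b ∘ σ.symm := fun c =>
      (Equiv.eq_comp_symm σ c b).symm
    simp only [h1, mul_ite, mul_one, mul_zero, Finset.sum_ite_eq', Finset.mem_univ, if_true,
      ite_mul, one_mul, zero_mul, Finset.sum_ite_eq]
    rw [← Equiv.prod_comp σ]
    simp
  set C := ∑ i : α → m, ∑ j : α → m, symSingle i j * (symSingle i j)ᴴ with hC
  have hmul : ∀ T : 𝒞, T.1 * C ∈ 𝒜 := by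
    rintro ⟨T, hT⟩
    have h1 := sum_symSingle_mul_mul_mem T
    simp only [commute_symSingle hT, Matrix.mul_assoc, ← Finset.mul_sum] at h1
    exact h1
  let φ : 𝒞 →ₗ[ℂ] 𝒜 :=
    { toFun := fun T => ⟨T.1 * C, hmul T⟩
      map_add' := fun S T => Subtype.ext (add_mul _ _ _)
      map_smul' := fun c T => Subtype.ext (Matrix.smul_mul _ _ _) }
  have hφ : Function.Injective φ := by
    rw [← LinearMap.ker_eq_bot, LinearMap.ker_eq_bot']
    intro T hT0
    exact Subtype.ext (eq_zero_of_mul_sum_symSingle (congrArg Subtype.val hT0))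
  rw [Submodule.eq_of_le_of_finrank_le hle (LinearMap.finrank_le_finrank_of_injective hφ)]
  exact hT

end Commutant

theorem intertwines_of_unitary {A B m : Type*} [Fintype A] [Fintype B] [DecidableEq A]
    [DecidableEq B] [Fintype m] [DecidableEq m] {T : Matrix (A → m) (B → m) ℂ}
    (hT : ∀ U ∈ Matrix.unitaryGroup m ℂ, tensorPow A U * T = T * tensorPow B U)
    (X : Matrix m m ℂ) : tensorPow A X * T = T * tensorPow B X := by
  ext a b
  let p : MvPolynomial (m × m) ℂ :=
    ∑ c : A → m, (∏ k, MvPolynomial.X (a k, c k)) * MvPolynomial.C (T c b) -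
      ∑ c : B → m, MvPolynomial.C (T a c) * ∏ k, MvPolynomial.X (c k, b k)
  have hp : ∀ Y : Matrix m m ℂ, MvPolynomial.eval (fun ij => Y ij.1 ij.2) p =
      (tensorPow A Y * T) a b - (T * tensorPow B Y) a b := by
    intro Y
    simp [p, Matrix.mul_apply, tensorPow_apply]
  have := eval_eq_zero_of_unitary p (fun U hU => by rw [hp, hT U hU, sub_self]) X
  rwa [hp, sub_eq_zero] at this

theorem tensorPow_two_smul_one (α m : Type*) [Fintype α] [DecidableEq α] [Fintype m]
    [DecidableEq m] :
    tensorPow α ((2 : ℂ) • (1 : Matrix m m ℂ)) = (2 : ℂ) ^ Fintype.card α • 1 := by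
  ext a b
  simp only [tensorPow_apply, Matrix.smul_apply, smul_eq_mul, Finset.prod_mul_distrib,
    Finset.prod_const, Finset.card_univ, Matrix.one_apply, Finset.prod_ite_zero, one_pow,
    funext_iff, Finset.mem_univ, forall_const]

theorem mem_span_placePerm_of_unitary {A B m : Type*} [Fintype A] [Fintype B] [DecidableEq A]
    [DecidableEq B] [Fintype m] [DecidableEq m] {T : Matrix (A → m) (B → m) ℂ}
    (hT : ∀ U ∈ Matrix.unitaryGroup m ℂ, tensorPow A U * T = T * tensorPow B U) :
    T ∈ Submodule.span ℂ (Set.range fun σ : B ≃ A => placePerm m σ) := by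
  have hX := intertwines_of_unitary hT
  by_cases hcard : Fintype.card B = Fintype.card A
  · let e : B ≃ A := Fintype.equivOfCardEq hcard
    let L : Matrix (A → m) (A → m) ℂ →ₗ[ℂ] Matrix (A → m) (B → m) ℂ :=
      { toFun := fun S => S.submatrix id fun j => j ∘ e.symm
        map_add' := fun _ _ => rfl
        map_smul' := fun _ _ => rfl }
    have h1 : T.submatrix id (fun i : A → m => i ∘ e) ∈
        Submodule.span ℂ (Set.range fun σ : Equiv.Perm A => placePerm m σ) := by
      refine mem_span_placePerm_of_commute fun X => ?_
      ext a b
      have h := congrFun (congrFun (hX X) a) (b ∘ e)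
      simp only [Matrix.mul_apply, Matrix.submatrix_apply, id_eq] at h ⊢
      rw [h, ← Equiv.sum_comp (e.arrowCongr (Equiv.refl m))]
      refine Finset.sum_congr rfl fun c _ => ?_
      have h2 : (e.arrowCongr (Equiv.refl m)) c ∘ e = c := by funext x; simp
      rw [h2, tensorPow_apply, tensorPow_apply, ← Equiv.prod_comp e]
      simp
    have h2 : L (T.submatrix id fun i : A → m => i ∘ e) = T := by
      ext i j
      change T i ((j ∘ e.symm) ∘ e) = T i j
      congr 1
      funext x
      simp
    rw [← h2]
    refine Submodule.span_le (p := (Submodule.span ℂ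
      (Set.range fun σ : B ≃ A => placePerm m σ)).comap L).2 ?_ h1
    rintro _ ⟨σ, rfl⟩
    refine Submodule.subset_span ⟨e.trans σ, ?_⟩
    ext i j
    change placePerm m (e.trans σ) i j = placePerm m σ i (j ∘ e.symm)
    rw [placePerm_apply, placePerm_apply]
    exact if_congr (Equiv.eq_comp_symm e (i ∘ σ) j).symm rfl rfl
  · convert Submodule.zero_mem _
    have h := hX ((2 : ℂ) • 1)
    rw [tensorPow_two_smul_one, tensorPow_two_smul_one, Matrix.smul_mul, Matrix.mul_smul,
      Matrix.one_mul, Matrix.mul_one, ← sub_eq_zero, ← sub_smul] at h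
    refine (smul_eq_zero.1 h).resolve_left ?_
    rw [sub_eq_zero]
    intro h3
    have h4 : (2 : ℕ) ^ Fintype.card A = 2 ^ Fintype.card B := by exact_mod_cast h3
    exact hcard (Nat.pow_right_injective le_rfl h4).symm

/-- The matching of `Fin N` that joins `σ b`, for `b` in a subset of the lower half, to `b` or to
the mirror image of `b`. -/
theorem exists_isSymMatching {N : ℕ} (hN : ∀ x : Fin N, x.rev ≠ x)
    (s : {x : Fin N // x < x.rev} → Bool) (σ : {k // s k = false} ≃ {k // s k = true})
    (t : {k // s k = false} → Bool) :
    ∃ M : Equiv.Perm (Fin N), IsSymMatching M ∧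
      ∀ b, M (σ b).1.1 = if t b then b.1.1.rev else b.1.1 := by
  let e₀ : {x : Fin N // x < x.rev} × Bool → Fin N := fun p => if p.2 then p.1.1.rev else p.1.1
  have he₀ : Function.Bijective e₀ := by
    constructor
    · rintro ⟨⟨x, hx⟩, b⟩ ⟨⟨y, hy⟩, c⟩ h
      cases b <;> cases c <;> simp [e₀] at h ⊢
      · exact h
      · rw [h, Fin.rev_rev] at hx
        exact hx.not_gt hy
      · rw [← h, Fin.rev_rev] at hy
        exact hy.not_gt hx
      · exact h
    · intro z
      rcases lowerHalf_eq hN z with h | h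
      · exact ⟨(lowerHalf hN z, false), h⟩
      · exact ⟨(lowerHalf hN z, true), by simp [e₀, h]⟩
  let e := Equiv.ofBijective e₀ he₀
  have herev : ∀ k r, e (k, !r) = (e (k, r)).rev := by
    intro k r
    cases r <;> simp [e, e₀]
  let p : {x : Fin N // x < x.rev} × Bool → {x : Fin N // x < x.rev} × Bool := fun x =>
    if h : s x.1 = true then ((σ.symm ⟨x.1, h⟩).1, xor x.2 (t (σ.symm ⟨x.1, h⟩)))
    else ((σ ⟨x.1, by simpa using h⟩).1, xor x.2 (t ⟨x.1, by simpa using h⟩))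
  have hp1 : ∀ b r, p ((σ b).1, r) = (b.1, xor r (t b)) := by
    intro b r
    simp only [p]
    rw [dif_pos (σ b).2]
    simp
  have hp2 : ∀ b r, p (b.1, r) = ((σ b).1, xor r (t b)) := by
    intro b r
    simp only [p]
    rw [dif_neg (by rw [b.2]; simp)]
  have hcases : ∀ k, (∃ b, k = (σ b).1) ∨ ∃ b : {k // s k = false}, k = b.1 := by
    intro k
    cases h : s k
    · exact Or.inr ⟨⟨k, h⟩, rfl⟩
    · exact Or.inl ⟨σ.symm ⟨k, h⟩, by simp⟩
  have hpinv : Function.Involutive p := by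
    rintro ⟨k, r⟩
    rcases hcases k with ⟨b, rfl⟩ | ⟨b, rfl⟩
    · rw [hp1, hp2]; simp
    · rw [hp2, hp1]; simp
  have hpne : ∀ x, (p x).1 ≠ x.1 := by
    rintro ⟨k, r⟩ h
    rcases hcases k with ⟨b, rfl⟩ | ⟨b, rfl⟩
    · rw [hp1] at h
      have := congrArg s h
      rw [b.2, (σ b).2] at this
      simp at this
    · rw [hp2] at h
      have := congrArg s h
      rw [b.2, (σ b).2] at this
      simp at this
  have hpnot : ∀ k r, p (k, !r) = ((p (k, r)).1, !(p (k, r)).2) := by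
    intro k r
    rcases hcases k with ⟨b, rfl⟩ | ⟨b, rfl⟩
    · simp [hp1]
    · simp [hp2]
  have hM : ∀ x, (e.permCongr hpinv.toPerm) (e x) = e (p x) := by
    intro x
    simp [Equiv.permCongr_apply]
  refine ⟨e.permCongr hpinv.toPerm, ⟨fun x => ?_, fun x => ?_, fun x h => ?_, fun x h => ?_⟩,
    fun b => ?_⟩
  · obtain ⟨x, rfl⟩ := e.surjective x
    rw [hM, hM, hpinv]
  · obtain ⟨⟨k, r⟩, rfl⟩ := e.surjective x
    rw [← herev, hM, hM, hpnot, herev]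
  · obtain ⟨x, rfl⟩ := e.surjective x
    rw [hM] at h
    exact hpne x (congrArg Prod.fst (e.injective h))
  · obtain ⟨⟨k, r⟩, rfl⟩ := e.surjective x
    rw [hM, ← herev] at h
    have h' := congrArg Prod.fst (e.injective h)
    exact hpne (k, r) h'
  · have h1 := hM ((σ b).1, false)
    rw [hp1, Bool.false_xor] at h1
    exact h1

theorem tensorPow_one (α m : Type*) [Fintype α] [DecidableEq m] :
    tensorPow α (1 : Matrix m m ℂ) = 1 := by
  classical
  ext a b
  simp only [tensorPow_apply, Matrix.one_apply, Finset.prod_ite_zero, Finset.prod_const_one,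
    funext_iff, Finset.mem_univ, forall_const]

section Components

variable {K : Type*} {l : ℕ}

/-- Combine a multi-index for the standard representation and one for its conjugate. -/
def glue (s : K → Bool) (i : {k // s k = true} → Fin l) (j : {k // s k = false} → Fin l) :
    K → Fin l ⊕ Fin l :=
  fun k => if h : s k = true then Sum.inl (i ⟨k, h⟩) else Sum.inr (j ⟨k, by simpa using h⟩)

theorem glue_of_true (s : K → Bool) (i : {k // s k = true} → Fin l)
    (j : {k // s k = false} → Fin l) (k : {k // s k = true}) : glue s i j k = Sum.inl (i k) :=
  dif_pos k.2

theorem glue_of_false (s : K → Bool) (i : {k // s k = true} → Fin l)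
    (j : {k // s k = false} → Fin l) (k : {k // s k = false}) : glue s i j k = Sum.inr (j k) :=
  dif_neg (by rw [k.2]; simp)

theorem isLeft_glue (s : K → Bool) (i : {k // s k = true} → Fin l)
    (j : {k // s k = false} → Fin l) (k : K) : (glue s i j k).isLeft = s k := by
  cases h : s k
  · rw [glue_of_false s i j ⟨k, h⟩]; rfl
  · rw [glue_of_true s i j ⟨k, h⟩]; rfl

theorem glue_injective (s : K → Bool) : Function.Injective fun p :
    ({k // s k = true} → Fin l) × ({k // s k = false} → Fin l) => glue s p.1 p.2 := by
  rintro ⟨i, j⟩ ⟨i', j'⟩ h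
  simp only at h
  refine Prod.ext (funext fun k => ?_) (funext fun k => ?_)
  · have := congrFun h k
    rwa [glue_of_true, glue_of_true, Sum.inl.injEq] at this
  · have := congrFun h k
    rwa [glue_of_false, glue_of_false, Sum.inr.injEq] at this

theorem exists_eq_glue {s : K → Bool} {a : K → Fin l ⊕ Fin l} (ha : ∀ k, (a k).isLeft = s k) :
    ∃ i j, a = glue s i j := by
  refine ⟨fun k => (a k).getLeft ((ha k).trans k.2),
    fun k => (a k).getRight (by rw [← Sum.not_isLeft, ha k, k.2]; simp), funext fun k => ?_⟩
  cases h : s k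
  · rw [glue_of_false s _ _ ⟨k, h⟩]; simp
  · rw [glue_of_true s _ _ ⟨k, h⟩]; simp

variable [Fintype K]

theorem prod_eq_mul_prod_bool (s : K → Bool) (f : K → ℂ) :
    ∏ k, f k = (∏ k : {k // s k = true}, f k) * ∏ k : {k // s k = false}, f k := by
  rw [← Fintype.prod_subtype_mul_prod_subtype (fun k => s k = true) f]
  congr 1
  exact Fintype.prod_equiv (Equiv.subtypeEquivRight (by simp)) _ _ fun _ => rfl

theorem tensorPow_dbl_glue (U : Matrix (Fin l) (Fin l) ℂ) (s : K → Bool)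
    (i i' : {k // s k = true} → Fin l) (j j' : {k // s k = false} → Fin l) :
    tensorPow K (dbl U) (glue s i j) (glue s i' j') =
      tensorPow _ U i i' * tensorPow _ (U.map (starRingEnd ℂ)) j j' := by
  simp only [tensorPow_apply]
  rw [prod_eq_mul_prod_bool s]
  simp only [glue_of_true, glue_of_false, dbl, Matrix.fromBlocks_apply₁₁,
    Matrix.fromBlocks_apply₂₂]

theorem tensorPow_dbl_glue_eq_zero (U : Matrix (Fin l) (Fin l) ℂ) (s : K → Bool)
    (i : {k // s k = true} → Fin l) (j : {k // s k = false} → Fin l) {a : K → Fin l ⊕ Fin l}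
    (ha : a ∉ Set.range fun p : ({k // s k = true} → Fin l) × ({k // s k = false} → Fin l) =>
      glue s p.1 p.2) : tensorPow K (dbl U) (glue s i j) a = 0 := by
  by_contra hne
  rw [tensorPow_apply, ← ne_eq, Finset.prod_ne_zero_iff] at hne
  refine ha ?_
  obtain ⟨i', j', rfl⟩ := exists_eq_glue (s := s) (a := a) fun k => by
    have h := hne k (Finset.mem_univ k)
    rw [← isLeft_glue s i j k]
    revert h
    rcases glue s i j k with x | x <;> rcases a k with y | y <;> simp [dbl]
  exact ⟨(i', j'), rfl⟩

variable [DecidableEq K]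

/-- The components of an invariant tensor are intertwiners. -/
theorem component_intertwines {v : (K → Fin l ⊕ Fin l) → ℂ}
    (hv : ∀ U ∈ Matrix.unitaryGroup (Fin l) ℂ, tensorPow K (dbl U) *ᵥ v = v) (s : K → Bool)
    {U : Matrix (Fin l) (Fin l) ℂ} (hU : U ∈ Matrix.unitaryGroup (Fin l) ℂ) :
    tensorPow {k // s k = true} U * Matrix.of (fun i j => v (glue s i j)) =
      Matrix.of (fun i j => v (glue s i j)) * tensorPow {k // s k = false} U := by
  set T : Matrix ({k // s k = true} → Fin l) ({k // s k = false} → Fin l) ℂ :=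
    Matrix.of fun i j => v (glue s i j) with hT
  have h1 : T = tensorPow {k // s k = true} U * T *
      (tensorPow {k // s k = false} (U.map (starRingEnd ℂ)))ᵀ := by
    ext i j
    have h2 := congrFun (hv U hU) (glue s i j)
    rw [Matrix.mulVec, dotProduct, ← Fintype.sum_of_injective _ (glue_injective s)
      (fun p => tensorPow K (dbl U) (glue s i j) (glue s p.1 p.2) * v (glue s p.1 p.2)) _
      (fun a ha => by rw [tensorPow_dbl_glue_eq_zero U s i j ha, zero_mul]) fun _ => rfl] at h2
    rw [hT, Matrix.of_apply, ← h2, Fintype.sum_prod_type_right]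
    simp only [Matrix.mul_apply, tensorPow_dbl_glue, Matrix.transpose_apply, Matrix.of_apply,
      Finset.sum_mul]
    exact Finset.sum_congr rfl fun j' _ => Finset.sum_congr rfl fun i' _ => by ring
  have h3 : (tensorPow {k // s k = false} (U.map (starRingEnd ℂ)))ᵀ * tensorPow _ U = 1 := by
    change tensorPow _ (U.map (starRingEnd ℂ))ᵀ * tensorPow _ U = 1
    rw [← tensorPow_mul, ← tensorPow_one]
    congr 1
    exact Matrix.mem_unitaryGroup_iff'.1 hU
  conv_rhs => rw [h1, Matrix.mul_assoc, h3, Matrix.mul_one]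

end Components

/-- The pairing of the standard representation with its conjugate, on basis vectors. -/
def basisPair {l : ℕ} : Fin l ⊕ Fin l → Fin l ⊕ Fin l → ℂ
  | Sum.inl i, Sum.inr j => if i = j then 1 else 0
  | _, _ => 0

theorem basisPair_eq {l : ℕ} (x y : Fin l ⊕ Fin l) : basisPair x y =
    ∑ r : Bool, (if r then -1 / 2 else 1 / 2) *
      symp l (Pi.single x 1) (if r then signFlip l (Pi.single y 1) else Pi.single y 1) := by
  rw [Fintype.sum_bool]
  simp only [if_true, Bool.false_eq_true, if_false]
  rcases x with i | i <;> rcases y with j | j <;>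
    simp [basisPair, symp_apply, Pi.single_apply, Finset.sum_ite_eq, eq_comm] <;>
    split_ifs <;> norm_num

/-- The complete contraction of a tensor along a bijection. -/
def contraction {K : Type*} [Fintype K] (l : ℕ) (s : K → Bool)
    (σ : {k // s k = false} ≃ {k // s k = true}) : (K → Fin l ⊕ Fin l) → ℂ :=
  fun a => ∏ b, basisPair (a (σ b)) (a b)

theorem contraction_glue {K : Type*} [Fintype K] {l : ℕ} (s : K → Bool)
    (σ : {k // s k = false} ≃ {k // s k = true}) (i : {k // s k = true} → Fin l)
    (j : {k // s k = false} → Fin l) :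
    contraction l s σ (glue s i j) = placePerm (Fin l) σ i j := by
  rw [contraction, placePerm_apply]
  simp only [glue_of_true, glue_of_false, basisPair, Finset.prod_ite_zero, Finset.prod_const_one,
    funext_iff, Finset.mem_univ, forall_const, Function.comp_apply]

theorem contraction_eq_zero {K : Type*} [Fintype K] {l : ℕ} {s : K → Bool}
    (σ : {k // s k = false} ≃ {k // s k = true}) {a : K → Fin l ⊕ Fin l}
    (ha : (fun k => (a k).isLeft) ≠ s) : contraction l s σ a = 0 := by
  by_contra hne
  rw [contraction, ← ne_eq, Finset.prod_ne_zero_iff] at hne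
  have h1 : ∀ b, (a (σ b)).isLeft = true ∧ (a b).isLeft = false := by
    intro b
    have h := hne b (Finset.mem_univ b)
    revert h
    rcases a (σ b) with x | x <;> rcases a b with y | y <;> simp [basisPair]
  refine ha (funext fun k => ?_)
  cases h : s k
  · exact (h1 ⟨k, h⟩).2
  · have := (h1 (σ.symm ⟨k, h⟩)).1
    rwa [Equiv.apply_symm_apply] at this

theorem contraction_mem_span {N : ℕ} (hN : ∀ x : Fin N, x.rev ≠ x) (l : ℕ)
    (s : {x : Fin N // x < x.rev} → Bool) (σ : {k // s k = false} ≃ {k // s k = true}) :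
    contraction l s σ ∈ Submodule.span ℂ
      (matchTensor l '' {M : Equiv.Perm (Fin N) | IsSymMatching M}) := by
  have key : ∀ t : {k // s k = false} → Bool, ∃ M : Equiv.Perm (Fin N), IsSymMatching M ∧ ∃ ε : ℂ,
      ∀ w : Fin N → Fin l ⊕ Fin l → ℂ, IsMirrored w →
        ∏ b, symp l (w (σ b).1.1) (if t b then signFlip l (w b.1.1) else w b.1.1) =
          ε * matchProd M w := by
    intro t
    obtain ⟨M, hM, hMt⟩ := exists_isSymMatching hN s σ t
    have hsep : ∀ b b' : {k // s k = false}, (σ b).1.1 ≠ b'.1.1 := by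
      intro b b' h
      have := congrArg s (Subtype.ext h)
      rw [(σ b).2, b'.2] at this
      simp at this
    have hlow : ∀ x y : {x : Fin N // x < x.rev}, x.1 ≠ y.1.rev := by
      intro x y h
      have hx := x.2
      rw [h, Fin.rev_rev] at hx
      exact hx.not_gt y.2
    obtain ⟨ε, -, hε⟩ := prod_transversal hM l (fun b => (σ b).1.1) (by
      intro b b' h
      rw [orbMin_eq_iff hM, hMt] at h
      rcases h with h | h | h | h
      · exact σ.injective (Subtype.ext (Subtype.ext h))
      · split_ifs at h
        · exact absurd h (hlow _ _)
        · exact absurd h (hsep _ _)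
      · exact absurd h (hlow _ _)
      · split_ifs at h
        · rw [Fin.rev_rev] at h
          exact absurd h (hsep _ _)
        · exact absurd h (hlow _ _)) (by
      have hin : ∀ k : {x : Fin N // x < x.rev}, ∃ b, orbMin M (σ b).1.1 = orbMin M k.1 := by
        intro k
        cases h : s k
        · refine ⟨⟨k, h⟩, ?_⟩
          rw [← orbMin_apply hM, hMt]
          split_ifs
          · exact orbMin_rev hM _
          · rfl
        · exact ⟨σ.symm ⟨k, h⟩, by rw [Equiv.apply_symm_apply]⟩
      intro x
      obtain ⟨b, hb⟩ := hin (lowerHalf hN x)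
      refine ⟨b, hb.trans ?_⟩
      rcases lowerHalf_eq hN x with h | h <;> rw [h]
      exact orbMin_rev hM x)
    refine ⟨M, hM, ε, fun w hw => ?_⟩
    rw [← hε w hw]
    refine Finset.prod_congr rfl fun b _ => ?_
    rw [hMt]
    split_ifs
    · rw [hw]
    · rfl
  choose M hM ε hε using key
  have hsum : contraction l s σ = ∑ t : {k // s k = false} → Bool,
      ((∏ b, if t b then (-1 / 2 : ℂ) else 1 / 2) * ε t) • matchTensor l (M t) := by
    funext a
    rw [Finset.sum_apply, contraction]
    simp only [basisPair_eq, Fintype.prod_sum, Finset.prod_mul_distrib]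
    refine Finset.sum_congr rfl fun t _ => ?_
    have h1 := hε t (mirror fun k => Pi.single (a k) 1) (mirror_isMirrored _)
    rw [Pi.smul_apply, smul_eq_mul, mul_assoc]
    congr 1
    refine Eq.trans ?_ h1
    refine Finset.prod_congr rfl fun b _ => ?_
    rw [mirror_of_lt _ (σ b).1.2, mirror_of_lt _ b.1.2]
  rw [hsum]
  exact Submodule.sum_mem _ fun t _ => Submodule.smul_mem _ _
    (Submodule.subset_span ⟨_, hM t, rfl⟩)

/-- First fundamental theorem: invariant tensors are combinations of matchings. -/
theorem mem_span_matchTensor_of_invariant {N : ℕ} (hN : ∀ x : Fin N, x.rev ≠ x) {l : ℕ}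
    {v : ({x : Fin N // x < x.rev} → Fin l ⊕ Fin l) → ℂ}
    (hv : ∀ U ∈ Matrix.unitaryGroup (Fin l) ℂ, tensorPow _ (dbl U) *ᵥ v = v) :
    v ∈ Submodule.span ℂ (matchTensor l '' {M : Equiv.Perm (Fin N) | IsSymMatching M}) := by
  have h1 := fun s => mem_span_placePerm_of_unitary fun U hU => component_intertwines hv s hU
  simp only [Submodule.mem_span_range_iff_exists_fun] at h1
  choose c hc using h1
  have hsum : v = ∑ s, ∑ σ, c s σ • contraction l s σ := by
    funext a
    rw [Finset.sum_apply, Finset.sum_eq_single fun k => (a k).isLeft]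
    · obtain ⟨i, j, hij⟩ := exists_eq_glue (a := a) fun k => rfl
      have h2 := congrFun (congrFun (hc fun k => (a k).isLeft) i) j
      rw [Matrix.of_apply, ← hij] at h2
      rw [← h2, Finset.sum_apply, Matrix.sum_apply]
      refine Finset.sum_congr rfl fun σ _ => ?_
      rw [Pi.smul_apply, Matrix.smul_apply, ← contraction_glue, ← hij]
    · intro s _ hs
      rw [Finset.sum_apply]
      refine Finset.sum_eq_zero fun σ _ => ?_
      rw [Pi.smul_apply, contraction_eq_zero σ (Ne.symm hs), smul_zero]
    · simp
  rw [hsum]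
  exact Submodule.sum_mem _ fun s _ => Submodule.sum_mem _ fun σ _ =>
    Submodule.smul_mem _ _ (contraction_mem_span hN l s σ)

/-- The average of the character of a representation is the dimension of its invariants. -/
theorem integral_trace_eq_finrank {G I : Type*} [Group G] [MeasurableSpace G] [MeasurableMul G]
    [Fintype I] [DecidableEq I] {μ : Measure G} [μ.IsMulLeftInvariant] [IsProbabilityMeasure μ]
    {R : G → Matrix I I ℂ} (hR : ∀ g h, R (g * h) = R g * R h)
    (hint : ∀ a b, Integrable (fun g => R g a b) μ) {p : Submodule ℂ (I → ℂ)}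
    (hp : ∀ v, v ∈ p ↔ ∀ g, R g *ᵥ v = v) :
    ∫ g, (R g).trace ∂μ = Module.finrank ℂ p := by
  set P : Matrix I I ℂ := Matrix.of fun a b => ∫ g, R g a b ∂μ with hP
  have hRP : ∀ g, R g * P = P := by
    intro g
    ext a b
    simp only [Matrix.mul_apply, hP, Matrix.of_apply]
    rw [← integral_mul_left_eq_self (fun h => R h a b) g]
    simp only [hR, Matrix.mul_apply, ← integral_const_mul]
    exact (integral_finsetSum _ fun c _ => (hint c b).const_mul _).symm
  have hproj : LinearMap.IsProj p (Matrix.toLin' P) := by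
    refine ⟨fun v => ?_, fun v hv => ?_⟩
    · rw [hp]
      intro g
      rw [Matrix.toLin'_apply, Matrix.mulVec_mulVec, hRP]
    · rw [hp] at hv
      funext a
      rw [Matrix.toLin'_apply]
      simp only [Matrix.mulVec, dotProduct, hP, Matrix.of_apply, ← integral_mul_const]
      rw [← integral_finsetSum _ fun c _ => (hint a c).mul_const _]
      calc ∫ g, ∑ c, R g a c * v c ∂μ = ∫ _, v a ∂μ := by
            congr 1
            funext g
            exact congrFun (hv g) a
        _ = v a := by simp
  rw [← hproj.trace, Matrix.trace_toLin'_eq]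
  simp only [Matrix.trace, Matrix.diag_apply, hP, Matrix.of_apply]
  exact integral_finsetSum _ fun a _ => hint a a

theorem trace_tensorPow_dbl (K : Type*) [Fintype K] [DecidableEq K] {l : ℕ}
    (U : Matrix (Fin l) (Fin l) ℂ) :
    (tensorPow K (dbl U)).trace = (U.trace + starRingEnd ℂ U.trace) ^ Fintype.card K := by
  have h : U.trace + starRingEnd ℂ U.trace = ∑ x, dbl U x x := by
    simp [Fintype.sum_sum_type, dbl, Matrix.trace, map_sum]
  rw [h, ← Finset.card_univ, ← Finset.prod_const, Fintype.prod_sum]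
  rfl

theorem integrable_tensorPow_dbl (K : Type*) [Fintype K] {l : ℕ}
    (μ : Measure (Matrix.unitaryGroup (Fin l) ℂ)) [IsProbabilityMeasure μ]
    (a b : K → Fin l ⊕ Fin l) :
    Integrable (fun U : Matrix.unitaryGroup (Fin l) ℂ => tensorPow K (dbl U.1) a b) μ := by
  have hentry : ∀ i j, Continuous fun U : Matrix.unitaryGroup (Fin l) ℂ => U.1 i j := fun i j =>
    (continuous_apply_apply i j).comp continuous_subtype_val
  refine Integrable.of_bound (C := 1) (Continuous.aestronglyMeasurable ?_)
    (Filter.Eventually.of_forall fun U => ?_)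
  · simp only [tensorPow_apply]
    refine continuous_finsetProd _ fun k _ => ?_
    rcases a k with i | i <;> rcases b k with j | j <;> simp only [dbl, Matrix.fromBlocks_apply₁₁,
      Matrix.fromBlocks_apply₁₂, Matrix.fromBlocks_apply₂₁, Matrix.fromBlocks_apply₂₂,
      Matrix.zero_apply, Matrix.map_apply]
    · exact hentry i j
    · exact continuous_const
    · exact continuous_const
    · exact Complex.continuous_conj.comp (hentry i j)
  · rw [tensorPow_apply, norm_prod]
    refine Finset.prod_le_one (fun _ _ => norm_nonneg _) fun k _ => ?_
    rcases a k with i | i <;> rcases b k with j | j <;>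
      simp [dbl, entry_norm_bound_of_unitary U.2]

theorem mem_span_matchTensor_iff {N : ℕ} (hN : ∀ x : Fin N, x.rev ≠ x) (l : ℕ)
    (v : ({x : Fin N // x < x.rev} → Fin l ⊕ Fin l) → ℂ) :
    v ∈ Submodule.span ℂ (Set.range fun M : {M : Equiv.Perm (Fin N) //
        IsSymMatching M ∧ lisLE (Fin.revPerm * M) (2 * l)} => matchTensor l M.1) ↔
      ∀ U : Matrix.unitaryGroup (Fin l) ℂ, tensorPow _ (dbl U.1) *ᵥ v = v := by
  constructor
  · intro hv U
    induction hv using Submodule.span_induction with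
    | mem v hv =>
      obtain ⟨M, rfl⟩ := hv
      exact tensorPow_dbl_mulVec_matchTensor M.2.1 U.2
    | zero => exact Matrix.mulVec_zero _
    | add v w _ _ hv hw => rw [Matrix.mulVec_add, hv, hw]
    | smul c v _ hv => rw [Matrix.mulVec_smul, hv]
  · intro hv
    refine Submodule.span_le.2 ?_ (mem_span_matchTensor_of_invariant hN fun U hU => hv ⟨U, hU⟩)
    rintro _ ⟨M, hM, rfl⟩
    exact matchVec_mem_span (fun _ => mirror_isMirrored _) hM

theorem rev_ne_self_of_even {N : ℕ} (hN : Even N) (x : Fin N) : x.rev ≠ x := by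
  intro h
  have h1 := congrArg Fin.val h
  rw [Fin.val_rev] at h1
  obtain ⟨k, rfl⟩ := hN
  omega

theorem card_lowerHalf (k : ℕ) : Fintype.card {x : Fin (2 * k) // x < x.rev} = k := by
  let e : {x : Fin (2 * k) // x < x.rev} ≃ Fin k :=
    { toFun := fun x => ⟨x.1, by
        have := x.2
        rw [Fin.lt_def, Fin.val_rev] at this
        omega⟩
      invFun := fun i => ⟨⟨i, by omega⟩, by
        rw [Fin.lt_def, Fin.val_rev]
        dsimp only
        omega⟩
      left_inv := fun _ => rfl
      right_inv := fun _ => rfl }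
  exact (Fintype.card_congr e).trans (Fintype.card_fin k)

theorem isSymMatching_revPerm_mul_iff {N : ℕ} (π : Equiv.Perm (Fin N)) :
    IsSymMatching (Fin.revPerm * π) ↔ π = π⁻¹ ∧ π = Fin.revPerm * π⁻¹ * Fin.revPerm ∧
      (∀ x, π x ≠ x) ∧ ∀ x, π x ≠ Fin.revPerm x := by
  constructor
  · intro hM
    have hrev : ∀ x, π x.rev = (π x).rev := fun x => by
      have := hM.comm_rev x
      simpa [Fin.rev_eq_iff] using this
    have hinv : ∀ x, π (π x) = x := fun x => by
      have := hM.invol x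
      simpa [hrev] using this
    have h1 : π = π⁻¹ := eq_inv_of_mul_eq_one_left (Equiv.ext hinv)
    refine ⟨h1, ?_, fun x hx => hM.ne_rev x ?_, fun x hx => hM.ne_self x ?_⟩
    · rw [← h1]
      ext x
      simp [hrev]
    · simp [hx]
    · simp [hx]
  · rintro ⟨h1, h2, h3, h4⟩
    have hinv : ∀ x, π (π x) = x := fun x => by
      nth_rewrite 1 [h1]
      exact π.symm_apply_apply x
    have hrev : ∀ x, π x.rev = (π x).rev := fun x => by
      conv_lhs => rw [h2, ← h1]
      simp
    refine ⟨fun x => ?_, fun x => ?_, fun x hx => h4 x ?_, fun x hx => h3 x ?_⟩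
    · simp [hrev, hinv]
    · simp [hrev]
    · simpa using congrArg Fin.rev hx
    · simpa using hx

theorem fuCount_eq_card (n l : ℕ) : fuCount n l = Nat.card {M : Equiv.Perm (Fin (4 * n)) //
    IsSymMatching M ∧ lisLE (Fin.revPerm * M) l} := by
  refine Nat.card_congr (Equiv.subtypeEquiv (Equiv.mulLeft Fin.revPerm) fun π => ?_)
  have h : Fin.revPerm * (Fin.revPerm * π) = π := by
    ext x
    simp
  rw [Equiv.coe_mulLeft, isSymMatching_revPerm_mul_iff, h]
  tauto

/-- `f^u_{n,2l} = E_{U ∈ U(l)} (Tr U + conj(Tr U))^{2n}`, the `2n`-th moment of twice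
the real part of the trace of a Haar-random `l×l` unitary matrix. -/
theorem fuCount_eq_unitary_real_trace_moment (n l : ℕ)
    (μ : Measure (Matrix.unitaryGroup (Fin l) ℂ))
    [μ.IsHaarMeasure] [IsProbabilityMeasure μ] :
    (fuCount n (2 * l) : ℂ) =
      ∫ U, (Matrix.trace (U : Matrix (Fin l) (Fin l) ℂ) +
        (starRingEnd ℂ) (Matrix.trace (U : Matrix (Fin l) (Fin l) ℂ))) ^ (2 * n) ∂μ := by

  classical
  have h4 : 4 * n = 2 * (2 * n) := by ring
  have hN : ∀ x : Fin (4 * n), x.rev ≠ x := rev_ne_self_of_even ⟨2 * n, by ring⟩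
  have h := integral_trace_eq_finrank (μ := μ)
    (R := fun U => tensorPow {x : Fin (4 * n) // x < x.rev} (dbl U.1))
    (fun U V => by rw [Submonoid.coe_mul, dbl_mul, tensorPow_mul])
    (integrable_tensorPow_dbl _ μ) (mem_span_matchTensor_iff hN l)
  rw [finrank_span_eq_card (linearIndependent_matchTensor (4 * n) l), ← Nat.card_eq_fintype_card,
    ← fuCount_eq_card] at h
  have hcard : Fintype.card {x : Fin (4 * n) // x < x.rev} = 2 * n := by
    rw [h4, card_lowerHalf]
  simp only [trace_tensorPow_dbl, hcard] at h
  exact h.symm
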